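/- Theorem 7.2 (finite speed of shrinking of the limit phase): Let d ≥ 2, assume m satisfies the mobility assumptions with lower bound θ > 0 and W the double-well assumptions. Let u₀ : ℝ^d → [-1,1] be uniformly continuous and, for each ε > 0, let u^ε : ℝ^d × [0,∞) → [-1,1] be a continuous viscosity solution of m(ε⁻¹x, εDu^ε) u^ε_t − Δu^ε + ε⁻² W'(u^ε) = 0 in ℝ^d × (0,∞) with u^ε(·,0) = u₀. For (x,t) ∈ ℝ^d × [0,∞) define liminf_* u^ε(x,t) = lim_{δ→0⁺} inf { u^ε(y,s) : ε + ‖x − y‖ + |t − s| ≤ δ, s > 0 }, and for t ≥ 0 set Ω_t^{(1)} = { x ∈ ℝ^d : liminf_* u^ε(x,t) = 1 }. If R > 0, t₀ ≥ 0, x₀ ∈ ℝ^d, the open ball B(x₀,R) is contained in Ω_{t₀}^{(1)}, and 0 < θ̲ < θ, then B(x₀, √(R² − 2θ̲⁻¹(d−1)s)) ⊆ Ω_{t₀+s}^{(1)} for every s ∈ [0, θ̲R²/(2(d−1))]. -/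

import Mathlib

open Set Filter Topology MeasureTheory

noncomputable section

abbrev Euc (d : ℕ) := EuclideanSpace ℝ (Fin d)

def IsIntVec {d : ℕ} (z : Euc d) : Prop := ∀ i, ∃ n : ℤ, z i = (n : ℝ)

noncomputable def clTrace {d : ℕ} (A : Euc d →L[ℝ] Euc d) : ℝ :=
  LinearMap.trace ℝ (Euc d) (A : Euc d →ₗ[ℝ] Euc d)

noncomputable def spaceGrad {d : ℕ} (φ : Euc d × ℝ → ℝ) (x : Euc d) (t : ℝ) : Euc d :=
  gradient (fun y => φ (y, t)) x

noncomputable def spaceHess {d : ℕ} (φ : Euc d × ℝ → ℝ) (x : Euc d) (t : ℝ) :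
    Euc d →L[ℝ] Euc d :=
  fderiv ℝ (fun y => gradient (fun z => φ (z, t)) y) x

noncomputable def spaceLap {d : ℕ} (φ : Euc d × ℝ → ℝ) (x : Euc d) (t : ℝ) : ℝ :=
  clTrace (spaceHess φ x t)

noncomputable def timeDeriv {d : ℕ} (φ : Euc d × ℝ → ℝ) (x : Euc d) (t : ℝ) : ℝ :=
  deriv (fun s => φ (x, s)) t

def DoubleWell (W : ℝ → ℝ) : Prop :=
  ContDiff ℝ 3 W ∧
  (∀ u ∈ Set.Icc (-1:ℝ) 1, 0 ≤ W u) ∧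
  W (-1) = 0 ∧ W 1 = 0 ∧
  (∀ u ∈ Set.Ioo (-1:ℝ) 1, 0 < W u) ∧
  deriv W (-1) = 0 ∧ deriv W 0 = 0 ∧ deriv W 1 = 0 ∧
  (∀ u ∈ Set.Ioo (-1:ℝ) 0, 0 < deriv W u) ∧
  (∀ u ∈ Set.Ioo (0:ℝ) 1, deriv W u < 0) ∧
  0 < deriv (deriv W) (-1) ∧ 0 < deriv (deriv W) 1 ∧ deriv (deriv W) 0 < 0

def Mobility (d : ℕ) (m : Euc d → Euc d → ℝ) (θ Θ : ℝ) : Prop :=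
  Continuous (fun p : Euc d × Euc d => m p.1 p.2) ∧
  (∀ y v z, IsIntVec z → m (y + z) v = m y v) ∧
  0 < θ ∧ (∀ y v, θ ≤ m y v ∧ m y v ≤ Θ) ∧
  (∃ H : ℝ, ∀ y y' v, |m y v - m y' v| ≤ H * ‖y - y'‖)

/-- Viscosity solution of m(ε⁻¹x, εDu) u_t − Δu + ε⁻²W'(u) = 0 in ℝ^d × (0,∞). -/
def IsEpsSolution {d : ℕ} (m : Euc d → Euc d → ℝ) (W : ℝ → ℝ) (ε : ℝ)
    (u : Euc d × ℝ → ℝ) : Prop :=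
  (∀ φ : Euc d × ℝ → ℝ, ContDiff ℝ (⊤ : ℕ∞) φ → ∀ (x : Euc d) (t : ℝ), 0 < t →
    IsLocalMaxOn (fun p => u p - φ p) {p : Euc d × ℝ | 0 < p.2} (x, t) →
      m (ε⁻¹ • x) (ε • spaceGrad φ x t) * timeDeriv φ x t - spaceLap φ x t
        + ε⁻¹ ^ 2 * deriv W (u (x, t)) ≤ 0) ∧
  (∀ φ : Euc d × ℝ → ℝ, ContDiff ℝ (⊤ : ℕ∞) φ → ∀ (x : Euc d) (t : ℝ), 0 < t →
    IsLocalMinOn (fun p => u p - φ p) {p : Euc d × ℝ | 0 < p.2} (x, t) →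
      0 ≤ m (ε⁻¹ • x) (ε • spaceGrad φ x t) * timeDeriv φ x t - spaceLap φ x t
        + ε⁻¹ ^ 2 * deriv W (u (x, t)))

/-- The lower half-relaxed limit liminf_* u^ε(x,t), expressed as the (monotone)
supremum over δ > 0 of the infima over points (and ε) δ-close to (x,t). -/
noncomputable def liminfStar {d : ℕ} (uu : ℝ → Euc d × ℝ → ℝ) (p : Euc d × ℝ) : ℝ :=
  ⨆ δ : {r : ℝ // 0 < r}, sInf {r : ℝ | ∃ (ε : ℝ) (y : Euc d) (s : ℝ),
    0 < ε ∧ 0 < s ∧ ε + ‖p.1 - y‖ + |p.2 - s| ≤ (δ : ℝ) ∧ r = uu ε (y, s)}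

/-!
Around time `t₀` the solutions are at least `1 / 2` on balls slightly smaller than `B(x₀, R)`, and
there the reaction term alone forces `1 - u^ε = O(ε²)` an instant later. Tilting `W` a little turns
its standing profile into a profile `Q` which connects the phase `-1` to a level `1 - η ≤ b < 1`
with `b ≤ 1 - A ε²`, over a width `o(1)` after scaling by `ε`, and which satisfies
`Q'' + κ ε Q' ≥ W'(Q)`. The function `Q((r(t) - |x - x₀|) / ε)` is then a subsolution as soon as
`(d - 1) / |x - x₀| + θ r'(t) ≤ -κ` near the front: because `r' ≤ 0`, only the lower bound of the
mobility matters, and a radius `r² = R'² - Λ (t - t₁)` with `θ Λ > 2 (d - 1)` leaves such a margin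
`κ`. Lying below `u^ε` at time `t₁`, the subsolution stays below, and equals `b` inside the front.
-/

theorem eventually_quadratic_le {g g' : ℝ → ℝ} {g'' C z : ℝ}
    (hg : ∀ᶠ y in 𝓝 z, HasDerivAt g (g' y) y) (hg' : HasDerivAt g' g'' z) (hC : C < g'') :
    ∀ᶠ y in 𝓝 z, g z + g' z * (y - z) + C / 2 * (y - z) ^ 2 ≤ g y := by
  let D : ℝ → ℝ := fun y => g y - (g z + g' z * (y - z) + C / 2 * (y - z) ^ 2)
  have hlin : ∀ y, HasDerivAt (fun y => y - z) 1 y := fun y => (hasDerivAt_id y).sub_const z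
  have hD : ∀ᶠ y in 𝓝 z, HasDerivAt D (g' y - g' z - C * (y - z)) y := by
    filter_upwards [hg] with y hy
    refine (hy.sub ((((hlin y).const_mul (g' z)).const_add (g z)).add
      (((hlin y).pow 2).const_mul (C / 2)))).congr_deriv ?_
    simp only [Nat.cast_ofNat, Nat.add_one_sub_one, pow_one, mul_one]
    ring
  have hD' : HasDerivAt (deriv D) (g'' - C) z := by
    refine HasDerivAt.congr_deriv (HasDerivAt.congr_of_eventuallyEq
      ((hg'.sub_const (g' z)).sub ((hlin z).const_mul C)) ?_) (by ring)
    filter_upwards [hD] with y hy using hy.deriv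
  have hmin : IsLocalMin D z :=
    isLocalMin_of_deriv_deriv_pos (by rw [hD'.deriv]; linarith)
      (by rw [hD.self_of_nhds.deriv]; ring) hD.self_of_nhds.continuousAt
  filter_upwards [hmin] with y hy
  have hDz : D z = 0 := by simp [D]
  rw [hDz] at hy
  linarith [sub_nonneg.1 hy]

theorem continuous_dslope_of_differentiable {G : ℝ → ℝ} (hG : Differentiable ℝ G) (b : ℝ) :
    Continuous (dslope G b) := by
  rw [← continuousOn_univ, continuousOn_dslope univ_mem]
  exact ⟨hG.continuous.continuousOn, hG b⟩

theorem hasDerivAt_mul_of_eq_zero {f g : ℝ → ℝ} {f' z : ℝ} (hf : HasDerivAt f f' z)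
    (hfz : f z = 0) (hg : ContinuousAt g z) : HasDerivAt (fun y => f y * g y) (f' * g z) z := by
  rw [hasDerivAt_iff_tendsto_slope] at hf ⊢
  refine (hf.mul hg.continuousWithinAt.tendsto).congr fun y => ?_
  simp only [slope_def_field, hfz]
  ring

theorem exists_autonomous_flow {F : ℝ → ℝ} {c M : ℝ} (hF : Continuous F) (hc : 0 < c)
    (hcF : ∀ y, c ≤ F y) (hFM : ∀ y, F y ≤ M) (w₀ : ℝ) :
    ∃ w : ℝ → ℝ, w 0 = w₀ ∧ ∀ z, HasDerivAt w (F (w z)) z := by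
  have hFpos : ∀ y, 0 < F y := fun y => hc.trans_le (hcF y)
  let T : ℝ → ℝ := fun y => ∫ s in w₀..y, (F s)⁻¹
  have hT : ∀ y, HasDerivAt T (F y)⁻¹ y := fun y =>
    ((hF.inv₀ fun y => (hFpos y).ne').integral_hasStrictDerivAt w₀ y).hasDerivAt
  have hTc : Continuous T := continuous_iff_continuousAt.2 fun y => (hT y).continuousAt
  have hTmono : StrictMono T := strictMono_of_hasDerivAt_pos hT fun y => inv_pos.2 (hFpos y)
  have hgrow : Monotone fun y => T y - M⁻¹ * y :=
    monotone_of_hasDerivAt_nonneg (fun y => (hT y).sub ((hasDerivAt_id y).const_mul M⁻¹))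
      fun y => by simpa using inv_anti₀ (hFpos y) (hFM y)
  have hM : 0 < M⁻¹ := inv_pos.2 ((hFpos 0).trans_le (hFM 0))
  have hTsurj : Function.Surjective T := by
    refine hTc.surjective ?_ ?_
    · refine tendsto_atTop_mono' _ ?_
        (tendsto_atTop_add_const_left _ (T 0) (tendsto_id.const_mul_atTop hM))
      filter_upwards [eventually_ge_atTop 0] with y hy
      have := hgrow hy
      simp only [id] at this ⊢
      linarith
    · refine tendsto_atBot_mono' _ ?_
        (tendsto_atBot_add_const_left _ (T 0) (tendsto_id.const_mul_atBot hM))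
      filter_upwards [eventually_le_atBot 0] with y hy
      have := hgrow hy
      simp only [id] at this ⊢
      linarith
  let e : ℝ ≃o ℝ := hTmono.orderIsoOfSurjective T hTsurj
  refine ⟨e.symm, ?_, fun z => ?_⟩
  · exact e.symm_apply_eq.2 (intervalIntegral.integral_same (f := fun s => (F s)⁻¹)).symm
  · simpa only [inv_inv] using
      HasDerivAt.of_local_left_inverse (f := T) e.symm.continuous.continuousAt (hT (e.symm z))
        (inv_pos.2 (hFpos _)).ne' (Eventually.of_forall e.apply_symm_apply)

theorem le_neg_dslope {a b c : ℝ} (hab : a < b) {G : ℝ → ℝ} (hG : Differentiable ℝ G)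
    (hGb : G b = 0) (hlow : ∀ q ∈ Icc a b, c * (b - q) ≤ G q) :
    ∀ q ∈ Icc a b, c ≤ -dslope G b q := by
  have hcont := continuous_dslope_of_differentiable hG b
  have hIco : ∀ q ∈ Ico a b, c ≤ -dslope G b q := fun q hq => by
    have hfac : (q - b) * dslope G b q = G q := by
      simpa only [smul_eq_mul, hGb, sub_zero] using sub_smul_dslope G b q
    refine le_of_mul_le_mul_right ?_ (sub_pos.2 hq.2)
    linarith [hlow q (Ico_subset_Icc_self hq)]
  rw [← closure_Ico hab.ne]
  exact fun q hq => le_on_closure hIco continuousOn_const hcont.neg.continuousOn hq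

theorem exists_sqrt_factor {a b c : ℝ} (hab : a < b) (hc : 0 ≤ c) {G : ℝ → ℝ}
    (hG : Differentiable ℝ G) (hGb : G b = 0) (hlow : ∀ q ∈ Icc a b, c * (b - q) ≤ G q) :
    ∃ F : ℝ → ℝ, Continuous F ∧ (∃ M, ∀ w, F w ≤ M) ∧ (∀ w, √(c / 2) ≤ F w) ∧
      (∀ w, w ^ 2 ≤ b - a → 2 * F w ^ 2 * w ^ 2 = G (b - w ^ 2)) ∧
      2 * F 0 ^ 2 = -deriv G b := by
  have hcont := continuous_dslope_of_differentiable hG b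
  have hle := le_neg_dslope hab hG hGb hlow
  let p : ℝ → ℝ := fun w => max a (b - w ^ 2)
  have hp : ∀ w, p w ∈ Icc a b := fun w =>
    ⟨le_max_left _ _, max_le hab.le (sub_le_self b (sq_nonneg w))⟩
  let F : ℝ → ℝ := fun w => √(-dslope G b (p w) / 2)
  have hFsq : ∀ w, 2 * F w ^ 2 = -dslope G b (p w) := fun w => by
    rw [Real.sq_sqrt (by linarith [hle _ (hp w)])]
    ring
  obtain ⟨M, hM⟩ := isCompact_Icc.bddAbove_image (K := Icc a b)
    (f := fun q => √(-dslope G b q / 2)) (by fun_prop)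
  refine ⟨F, by fun_prop, ⟨M, fun w => hM (mem_image_of_mem _ (hp w))⟩, fun w => ?_,
    fun w hw => ?_, ?_⟩
  · exact Real.sqrt_le_sqrt (by linarith [hle _ (hp w)])
  · have hpw : p w = b - w ^ 2 := max_eq_right (by linarith)
    have hfac := sub_smul_dslope G b (b - w ^ 2)
    rw [smul_eq_mul, hGb] at hfac
    rw [hFsq, hpw]
    linarith
  · have hp0 : p 0 = b := by simp [p, hab.le]
    rw [hFsq, hp0, dslope_same]

/-- Profiles of subsolutions that depend on one variable only: `Q` solves
`Q'' + μ Q' ≥ f (Q)` on `{z | 0 < z}`, exceeds the level `a` exactly there, and equals its maximal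
value `b` from `l` on. The differential inequality is encoded by second order Taylor polynomials
lying below `Q`, so that `Q` may have a kink at the place where it reaches `b`. -/
structure IsSubwave (f : ℝ → ℝ) (μ a b l : ℝ) (Q : ℝ → ℝ) : Prop where
  continuous : Continuous Q
  le_left : ∀ z ≤ 0, Q z ≤ a
  left_lt : ∀ z, 0 < z → a < Q z
  le_right : ∀ z, Q z ≤ b
  eq_right : ∀ z, l ≤ z → Q z = b
  taylor : ∀ z, 0 < z → ∃ P, 0 ≤ P ∧ ∀ C < f (Q z) - μ * P,
    ∀ᶠ y in 𝓝 z, Q z + P * (y - z) + C / 2 * (y - z) ^ 2 ≤ Q y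

/- In the variable `w = -√(b - Q)` the profile equation `Q' = √(2 G(Q))`, hence `Q'' = G'(Q)`, reads
`w' = F(w)` with `F` continuous and bounded below by a positive constant. So `Q` reaches `b` at a
finite place, where `w = 0`, and is continued by `b` through the truncation `min w 0`. -/
section SqrtVariable

variable {a b : ℝ} {G G' F w : ℝ → ℝ} {z : ℝ}

theorem neg_two_mul_eq_sqrt (hFpos : ∀ w, 0 < F w)
    (hFG : ∀ w, w ^ 2 ≤ b - a → 2 * F w ^ 2 * w ^ 2 = G (b - w ^ 2)) {x : ℝ}
    (hx : -√(b - a) < x) (hx₀ : x ≤ 0) : -2 * x * F x = √(2 * G (b - x ^ 2)) := by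
  have hsq : x ^ 2 ≤ b - a := by
    have hpos : 0 < b - a := Real.sqrt_pos.1 (by linarith)
    have habs : |x| ≤ √(b - a) := abs_le.2 ⟨hx.le, hx₀.trans (Real.sqrt_nonneg _)⟩
    simpa only [sq_abs, Real.sq_sqrt hpos.le] using pow_le_pow_left₀ (abs_nonneg x) habs 2
  have hnonneg : 0 ≤ -2 * x * F x := by nlinarith [hFpos x]
  rw [← hFG x hsq, ← Real.sqrt_sq hnonneg]
  ring_nf

theorem hasDerivAt_neg_two_mul (hG : ∀ q, HasDerivAt G (G' q) q) (hF : Continuous F)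
    (hFpos : ∀ w, 0 < F w)
    (hFG : ∀ w, w ^ 2 ≤ b - a → 2 * F w ^ 2 * w ^ 2 = G (b - w ^ 2))
    (hF₀ : 2 * F 0 ^ 2 = -G' b) (hw : ∀ z, HasDerivAt w (F (w z)) z)
    (hz : -√(b - a) < w z) (hz₀ : w z ≤ 0) :
    HasDerivAt (fun y => -2 * w y * F (w y)) (G' (b - w z ^ 2)) z := by
  have hwc : ContinuousAt w z := (hw z).continuousAt
  rcases hz₀.lt_or_eq with hneg | hzero
  · have hP := neg_two_mul_eq_sqrt hFpos hFG hz hz₀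
    have hPpos : 0 < -2 * w z * F (w z) := by nlinarith [hFpos (w z)]
    have hGpos : 0 < 2 * G (b - w z ^ 2) := Real.sqrt_pos.1 (hP ▸ hPpos)
    have hv : HasDerivAt (fun y => b - w y ^ 2) (-2 * w z * F (w z)) z := by
      refine (((hw z).pow 2).const_sub b).congr_deriv ?_
      simp
    refine (((((hG _).comp z hv).const_mul 2).sqrt hGpos.ne').congr_of_eventuallyEq
      ?_).congr_deriv ?_
    · filter_upwards [hwc.eventually (lt_mem_nhds hz), hwc.eventually (gt_mem_nhds hneg)]
        with y hy hy₀ using neg_two_mul_eq_sqrt hFpos hFG hy hy₀.le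
    · rw [Function.comp_apply, ← hP, mul_div_mul_left _ _ two_ne_zero,
        mul_div_cancel_right₀ _ hPpos.ne']
  · refine (hasDerivAt_mul_of_eq_zero ((hw z).const_mul (-2)) (by simp [hzero])
      (hF.continuousAt.comp hwc)).congr_deriv ?_
    simp only [hzero, Function.comp_apply, zero_pow two_ne_zero, sub_zero]
    linear_combination -hF₀

theorem exists_quadratic_le_sub_sq {f : ℝ → ℝ} {μ : ℝ} (hab : a < b)
    (hG : ∀ q, HasDerivAt G (G' q) q) (hf : ∀ q ∈ Ioc a b, f q - μ * √(2 * G q) ≤ G' q)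
    (hF : Continuous F) (hFpos : ∀ w, 0 < F w)
    (hFG : ∀ w, w ^ 2 ≤ b - a → 2 * F w ^ 2 * w ^ 2 = G (b - w ^ 2))
    (hF₀ : 2 * F 0 ^ 2 = -G' b) (hw : ∀ z, HasDerivAt w (F (w z)) z) (hz : -√(b - a) < w z) :
    ∃ P, 0 ≤ P ∧ ∀ C < f (b - min (w z) 0 ^ 2) - μ * P, ∀ᶠ y in 𝓝 z,
      b - min (w z) 0 ^ 2 + P * (y - z) + C / 2 * (y - z) ^ 2 ≤ b - min (w y) 0 ^ 2 := by
  rcases le_or_gt (w z) 0 with hwz | hwz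
  · have hP := neg_two_mul_eq_sqrt hFpos hFG hz hwz
    refine ⟨√(2 * G (b - w z ^ 2)), Real.sqrt_nonneg _, fun C hC => ?_⟩
    rw [min_eq_left hwz] at hC ⊢
    have hv : ∀ᶠ y in 𝓝 z, HasDerivAt (fun y => b - w y ^ 2) (-2 * w y * F (w y)) y :=
      Eventually.of_forall fun y => (((hw y).pow 2).const_sub b).congr_deriv (by simp)
    have hmem : b - w z ^ 2 ∈ Ioc a b := by
      refine ⟨?_, sub_le_self b (sq_nonneg _)⟩
      nlinarith [Real.sq_sqrt (sub_pos.2 hab).le]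
    filter_upwards [eventually_quadratic_le hv
      (hasDerivAt_neg_two_mul hG hF hFpos hFG hF₀ hw hz hwz) (hC.trans_le (hf _ hmem))] with y hy
    rw [← hP]
    refine hy.trans (sub_le_sub_left (sq_le_sq.2 ?_) b)
    rcases le_total (w y) 0 with h | h <;> simp [h]
  · refine ⟨0, le_rfl, fun C hC => ?_⟩
    have hGb : G b = 0 := by simpa using (hFG 0 (by simpa using hab.le)).symm
    rw [min_eq_right hwz.le, zero_pow two_ne_zero, sub_zero, mul_zero, sub_zero] at hC
    have hneg : C ≤ 0 := by
      have := hf b (right_mem_Ioc.2 hab)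
      rw [hGb, mul_zero, Real.sqrt_zero, mul_zero, sub_zero] at this
      nlinarith [sq_nonneg (F 0)]
    filter_upwards [(hw z).continuousAt.eventually (lt_mem_nhds hwz)] with y hy
    rw [min_eq_right hwz.le, min_eq_right hy.le]
    nlinarith [sq_nonneg (y - z)]

theorem isSubwave_sub_sq {f : ℝ → ℝ} {μ c : ℝ} (hab : a < b) (hG : ∀ q, HasDerivAt G (G' q) q)
    (hf : ∀ q ∈ Ioc a b, f q - μ * √(2 * G q) ≤ G' q) (hc : 0 < c) (hF : Continuous F)
    (hcF : ∀ w, c ≤ F w) (hFG : ∀ w, w ^ 2 ≤ b - a → 2 * F w ^ 2 * w ^ 2 = G (b - w ^ 2))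
    (hF₀ : 2 * F 0 ^ 2 = -G' b) (hw₀ : w 0 = -√(b - a))
    (hw : ∀ z, HasDerivAt w (F (w z)) z) :
    IsSubwave f μ a b (√(b - a) / c) (fun z => b - min (w z) 0 ^ 2) := by
  have hFpos : ∀ w, 0 < F w := fun w => hc.trans_le (hcF w)
  have hwc : Continuous w := continuous_iff_continuousAt.2 fun z => (hw z).continuousAt
  have hmono : StrictMono w := strictMono_of_hasDerivAt_pos hw fun z => hFpos _
  have hgrow : Monotone fun z => w z - c * z :=
    monotone_of_hasDerivAt_nonneg (fun z => (hw z).sub ((hasDerivAt_id z).const_mul c))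
      fun z => by simpa using hcF (w z)
  have hsq : √(b - a) ^ 2 = b - a := Real.sq_sqrt (sub_pos.2 hab).le
  have hsqrt : 0 < √(b - a) := Real.sqrt_pos.2 (sub_pos.2 hab)
  have hpos : ∀ z, 0 < z → -√(b - a) < w z := fun z hz => hw₀ ▸ hmono hz
  refine ⟨by fun_prop, fun z hz => ?_, fun z hz => ?_, fun z => sub_le_self b (sq_nonneg _),
    fun z hz => ?_, fun z hz => ?_⟩
  · have hwz : w z ≤ -√(b - a) := hw₀ ▸ hmono.monotone hz
    rw [min_eq_left (by linarith)]
    nlinarith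
  · have hmin : -√(b - a) < min (w z) 0 := lt_min (hpos z hz) (neg_lt_zero.2 hsqrt)
    nlinarith [min_le_right (w z) 0]
  · have h := hgrow ((by positivity : 0 ≤ √(b - a) / c).trans hz)
    have hcz := (div_le_iff₀' hc).1 hz
    simp only [hw₀] at h
    rw [min_eq_right (by linarith), zero_pow two_ne_zero, sub_zero]
  · exact exists_quadratic_le_sub_sq hab hG hf hF hFpos hFG hF₀ hw (hpos z hz)

end SqrtVariable

theorem exists_isSubwave {f G G' : ℝ → ℝ} {μ a b c : ℝ} (hab : a < b) (hc : 0 < c)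
    (hG : ∀ q, HasDerivAt G (G' q) q) (hGb : G b = 0) (hlow : ∀ q ∈ Icc a b, c * (b - q) ≤ G q)
    (hf : ∀ q ∈ Ioc a b, f q - μ * √(2 * G q) ≤ G' q) :
    ∃ Q, IsSubwave f μ a b (√(b - a) / √(c / 2)) Q := by
  obtain ⟨F, hF, ⟨M, hM⟩, hcF, hFG, hF₀⟩ :=
    exists_sqrt_factor hab hc.le (fun q => (hG q).differentiableAt) hGb hlow
  have hc' : 0 < √(c / 2) := Real.sqrt_pos.2 (half_pos hc)
  obtain ⟨w, hw₀, hw⟩ := exists_autonomous_flow hF hc' hcF hM (-√(b - a))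
  rw [(hG b).deriv] at hF₀
  exact ⟨_, isSubwave_sub_sq hab hG hf hc' hF hcF hFG hF₀ hw₀ hw⟩

theorem eventually_nhdsGT_lt {f : ℝ → ℝ} {x a : ℝ} (hf : ContinuousAt f x) (hfx : f x < a) :
    ∀ᶠ y in 𝓝[>] x, f y < a :=
  (hf.eventually (gt_mem_nhds hfx)).filter_mono nhdsWithin_le_nhds

theorem exists_le_add_mul_sub {f : ℝ → ℝ} (hf : ContDiff ℝ 1 f) (a b : ℝ) :
    ∃ L, 0 ≤ L ∧ ∀ v ∈ Icc a b, ∀ w ∈ Icc a b, v ≤ w → f v ≤ f w + L * (w - v) := by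
  obtain ⟨K, hK⟩ := hf.contDiffOn.exists_lipschitzOnWith one_ne_zero (convex_Icc a b) isCompact_Icc
  refine ⟨K, K.2, fun v hv w hw hvw => ?_⟩
  have h := hK.le_add_mul hv hw
  rwa [Real.dist_eq, abs_sub_comm, abs_of_nonneg (sub_nonneg.2 hvw)] at h

theorem exists_le_neg_mul_sub {f : ℝ → ℝ} {a b : ℝ} (hab : a ≤ b) (hf : Differentiable ℝ f)
    (hfb : f b = 0) (hf' : 0 < deriv f b) (hneg : ∀ v ∈ Ico a b, f v < 0) :
    ∃ c, 0 < c ∧ ∀ v ∈ Icc a b, f v ≤ -(c * (b - v)) := by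
  have hcont := continuous_dslope_of_differentiable hf b
  have hfac : ∀ v, (v - b) * dslope f b v = f v := fun v => by
    simpa only [smul_eq_mul, hfb, sub_zero] using sub_smul_dslope f b v
  obtain ⟨v₀, hv₀, hmin⟩ := isCompact_Icc.exists_isMinOn (nonempty_Icc.2 hab) hcont.continuousOn
  refine ⟨dslope f b v₀, ?_, fun v hv => ?_⟩
  · rcases hv₀.2.eq_or_lt with rfl | hlt
    · rwa [dslope_same]
    · have := hneg v₀ ⟨hv₀.1, hlt⟩
      rw [← hfac] at this
      exact pos_of_mul_neg_right this (sub_neg.2 hlt).le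
  · have := mul_le_mul_of_nonneg_left (hmin hv : dslope f b v₀ ≤ dslope f b v) (sub_nonneg.2 hv.2)
    linarith [hfac v]

/-- The one-sided properties of a double-well potential: `1` is a nondegenerate well of `W`,
and `W` is positive between it and the other phase `-1`, about which nothing is assumed. -/
structure StableWell (W : ℝ → ℝ) : Prop where
  contDiff : ContDiff ℝ 2 W
  map_one : W 1 = 0
  pos : ∀ u ∈ Ioo (-1 : ℝ) 1, 0 < W u
  deriv_one : deriv W 1 = 0
  deriv_neg : ∀ u ∈ Ioo (0 : ℝ) 1, deriv W u < 0
  deriv_deriv_one : 0 < deriv (deriv W) 1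

theorem DoubleWell.stableWell {W : ℝ → ℝ} (hW : DoubleWell W) : StableWell W := by
  obtain ⟨hC, -, -, hW1, hpos, -, -, h1, -, hneg, -, h1', -⟩ := hW
  exact ⟨hC.of_le (by norm_num), hW1, hpos, h1, hneg, h1'⟩

/-- A function `h`, with derivative `h' ≥ -B`, that switches from `1` to `-1` across
`[-1/2, 1/2]`. Adding a small multiple of it tilts the two wells of a potential. -/
structure IsSwitch (h h' : ℝ → ℝ) (B : ℝ) : Prop where
  hasDerivAt : ∀ q, HasDerivAt h (h' q) q
  abs_le_one : ∀ q, |h q| ≤ 1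
  eq_one : ∀ q ≤ -(1 / 2), h q = 1
  eq_neg_one : ∀ q, 1 / 2 ≤ q → h q = -1
  deriv_eq_zero : ∀ q ∉ Ioo (-(1 / 2) : ℝ) (1 / 2), h' q = 0
  neg_le_deriv : ∀ q, -B ≤ h' q

theorem exists_isSwitch : ∃ (h h' : ℝ → ℝ) (B : ℝ), 0 < B ∧ IsSwitch h h' B := by
  let h : ℝ → ℝ := fun q => 1 - 2 * Real.smoothTransition (q + 1 / 2)
  have hsmooth : ContDiff ℝ 1 h :=
    contDiff_const.sub (contDiff_const.mul (Real.smoothTransition.contDiff.comp (by fun_prop)))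
  have habs : ∀ q, |h q| ≤ 1 := fun q => abs_le.2
    ⟨by linarith [Real.smoothTransition.le_one (q + 1 / 2)],
      by linarith [Real.smoothTransition.nonneg (q + 1 / 2)]⟩
  have hleft : ∀ q ≤ -(1 / 2), h q = 1 := fun q hq => by
    simp only [h, Real.smoothTransition.zero_of_nonpos (by linarith : q + 1 / 2 ≤ 0)]
    norm_num
  have hright : ∀ q, 1 / 2 ≤ q → h q = -1 := fun q hq => by
    simp only [h, Real.smoothTransition.one_of_one_le (by linarith : 1 ≤ q + 1 / 2)]
    norm_num
  have hzero : ∀ q ∉ Ioo (-(1 / 2) : ℝ) (1 / 2), deriv h q = 0 := fun q hq => by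
    rcases le_or_gt q (-(1 / 2)) with hq₁ | hq₁
    · exact IsLocalMax.deriv_eq_zero
        (Eventually.of_forall fun p => by rw [hleft q hq₁]; exact (abs_le.1 (habs p)).2)
    · have hq₂ : 1 / 2 ≤ q := not_lt.1 fun h => hq ⟨hq₁, h⟩
      exact IsLocalMin.deriv_eq_zero
        (Eventually.of_forall fun p => by rw [hright q hq₂]; exact (abs_le.1 (habs p)).1)
  obtain ⟨B, hB⟩ := (isCompact_Icc (a := (-(1 / 2) : ℝ)) (b := 1 / 2)).exists_bound_of_continuousOn
    (hsmooth.continuous_deriv le_rfl).continuousOn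
  refine ⟨h, deriv h, |B| + 1, by positivity, fun q => (hsmooth.differentiable one_ne_zero
    q).hasDerivAt, habs, hleft, hright, hzero, fun q => ?_⟩
  by_cases hq : q ∈ Ioo (-(1 / 2) : ℝ) (1 / 2)
  · linarith [neg_abs_le (deriv h q), (hB q (Ioo_subset_Icc_self hq)).trans (le_abs_self B),
      Real.norm_eq_abs (deriv h q)]
  · rw [hzero q hq]
    linarith [abs_nonneg B]

namespace StableWell

variable {W : ℝ → ℝ}

theorem nonneg (hW : StableWell W) : ∀ u ∈ Icc (-1 : ℝ) 1, 0 ≤ W u := by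
  rw [← closure_Ioo (by norm_num)]
  exact fun u hu => le_on_closure (fun v hv => (hW.pos v hv).le) continuousOn_const
    hW.contDiff.continuous.continuousOn hu

theorem contDiff_deriv (hW : StableWell W) : ContDiff ℝ 1 (deriv W) :=
  ((contDiff_succ_iff_deriv (n := 1)).1 hW.contDiff).2.2

theorem hasDerivAt (hW : StableWell W) (q : ℝ) : HasDerivAt W (deriv W q) q :=
  (hW.contDiff.differentiable two_ne_zero q).hasDerivAt

theorem exists_deriv_le (hW : StableWell W) :
    ∃ c, 0 < c ∧ ∀ v ∈ Icc (1 / 2 : ℝ) 1, deriv W v ≤ -(c * (1 - v)) :=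
  exists_le_neg_mul_sub (by norm_num) (hW.contDiff_deriv.differentiable one_ne_zero)
    hW.deriv_one hW.deriv_deriv_one
    fun v hv => hW.deriv_neg v ⟨by linarith [hv.1], hv.2⟩

theorem exists_level (hW : StableWell W) {v : ℝ} (hv : v ∈ Ioo (-1) 1) :
    ∃ C, 0 < C ∧ ∀ᶠ s in 𝓝[>] (0 : ℝ), ∃ b ∈ Ioo v 1, W b = s ∧ s ≤ C * (1 - b) := by
  obtain ⟨C, hC, hWC⟩ := exists_le_add_mul_sub (hW.contDiff.of_le one_le_two) (-1) 1
  refine ⟨C + 1, by positivity, ?_⟩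
  filter_upwards [self_mem_nhdsWithin, eventually_nhdsGT_lt continuousAt_id (hW.pos v hv)]
    with s (hs : 0 < s) hsv
  obtain ⟨b, hb, rfl⟩ := intermediate_value_Ioo' hv.2.le hW.contDiff.continuous.continuousOn
    ⟨hW.map_one.trans_lt hs, hsv⟩
  refine ⟨b, hb, rfl, ?_⟩
  have := hWC b ⟨by linarith [hv.1, hb.1], hb.2.le⟩ 1 (by norm_num) hb.2.le
  rw [hW.map_one] at this
  linarith [hb.2]

section Tilt

variable {h h' : ℝ → ℝ} {B b s w₀ : ℝ}

theorem le_tilt (hW : StableWell W) (hh : IsSwitch h h' B) {c : ℝ} (hc : 0 ≤ c)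
    (hWc : ∀ v ∈ Icc (1 / 2 : ℝ) 1, deriv W v ≤ -(c * (1 - v)))
    (hWw : ∀ q ∈ Icc (-(1 / 2) : ℝ) (1 / 2), w₀ ≤ W q) (hs : 0 ≤ s) (hsw : 2 * s ≤ w₀)
    (hb : b ≤ 1) (hWb : W b = s) {q : ℝ} (hq : q ∈ Icc (-1) b) :
    min (s / 2) (c * (1 - b)) * (b - q) ≤ W q + s * h q := by
  have hbq : 0 ≤ b - q := sub_nonneg.2 hq.2
  have hs2 : min (s / 2) (c * (1 - b)) * (b - q) ≤ s := by
    nlinarith [mul_le_mul_of_nonneg_right (min_le_left (s / 2) (c * (1 - b))) hbq, hq.1]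
  rcases le_total q (-(1 / 2)) with hq₁ | hq₁
  · rw [hh.eq_one q hq₁]
    linarith [hW.nonneg q ⟨hq.1, hq.2.trans hb⟩]
  rcases le_total q (1 / 2) with hq₂ | hq₂
  · nlinarith [hWw q ⟨hq₁, hq₂⟩, (abs_le.1 (hh.abs_le_one q)).1]
  · rw [hh.eq_neg_one q hq₂]
    have hmean : W b - W q ≤ -(c * (1 - b)) * (b - q) := by
      refine (convex_Icc q b).image_sub_le_mul_sub_of_deriv_le hW.contDiff.continuous.continuousOn
        (hW.contDiff.differentiable two_ne_zero).differentiableOn (fun x hx => ?_)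
        q ⟨le_rfl, hq.2⟩ b ⟨hq.2, le_rfl⟩ hq.2
      rw [interior_Icc] at hx
      refine (hWc x ⟨hq₂.trans hx.1.le, hx.2.le.trans hb⟩).trans ?_
      linarith [mul_le_mul_of_nonneg_left hx.2.le hc]
    linarith [mul_le_mul_of_nonneg_right (min_le_right (s / 2) (c * (1 - b))) hbq]

theorem deriv_sub_le_tilt (hh : IsSwitch h h' B) (hB : 0 ≤ B) (hw₀ : 0 < w₀)
    (hWw : ∀ q ∈ Icc (-(1 / 2) : ℝ) (1 / 2), w₀ ≤ W q) (hs : 0 ≤ s) (hsw : 2 * s ≤ w₀) (q : ℝ) :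
    deriv W q - B / √w₀ * s * √(2 * (W q + s * h q)) ≤ deriv W q + s * h' q := by
  by_cases hq : q ∈ Ioo (-(1 / 2) : ℝ) (1 / 2)
  · have hG : w₀ ≤ 2 * (W q + s * h q) := by
      nlinarith [hWw q (Ioo_subset_Icc_self hq), (abs_le.1 (hh.abs_le_one q)).1]
    have : 0 < √w₀ := Real.sqrt_pos.2 hw₀
    have hle : s * B ≤ B / √w₀ * s * √(2 * (W q + s * h q)) :=
      calc s * B = B / √w₀ * s * √w₀ := by field_simp
        _ ≤ _ := by gcongr
    nlinarith [hh.neg_le_deriv q]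
  · rw [hh.deriv_eq_zero q hq, mul_zero, add_zero]
    exact sub_le_self _ (by positivity)

end Tilt

theorem exists_isSubwave_tilt (hW : StableWell W) {v : ℝ} (hv : v ∈ Ico (1 / 2) 1) :
    ∃ k c C, 0 < k ∧ 0 < c ∧ 0 < C ∧ ∀ᶠ s in 𝓝[>] (0 : ℝ), ∃ b ∈ Ioo v 1, s ≤ C * (1 - b) ∧
      ∃ Q, IsSubwave (deriv W) (k * s) (-1) b (√(b - -1) / √(c * s / 2)) Q := by
  obtain ⟨h, h', B, hB, hh⟩ := exists_isSwitch
  obtain ⟨c, hc, hWc⟩ := hW.exists_deriv_le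
  obtain ⟨C, hC, hlevel⟩ := hW.exists_level (v := v) ⟨by linarith [hv.1], hv.2⟩
  obtain ⟨q₀, hq₀, hmin⟩ := (isCompact_Icc (a := (-(1 / 2) : ℝ)) (b := 1 / 2)).exists_isMinOn
    ⟨0, by norm_num⟩ hW.contDiff.continuous.continuousOn
  have hw₀ : 0 < W q₀ := hW.pos q₀ ⟨by linarith [hq₀.1], by linarith [hq₀.2]⟩
  refine ⟨B / √(W q₀), min (1 / 2) (c / C), C, by positivity, by positivity, hC, ?_⟩
  filter_upwards [self_mem_nhdsWithin, hlevel,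
    eventually_nhdsGT_lt continuousAt_id (half_pos hw₀)] with s (hs : 0 < s) ⟨b, hb, hWb, hbC⟩ hsw
  have hsw' : 2 * s ≤ W q₀ := by
    rw [id] at hsw
    linarith
  refine ⟨b, hb, hbC, exists_isSubwave (G := fun q => W q + s * h q)
    (G' := fun q => deriv W q + s * h' q) (by linarith [hv.1, hb.1]) (by positivity)
    (fun q => (hW.hasDerivAt q).add ((hh.hasDerivAt q).const_mul s)) ?_ (fun q hq => ?_)
    fun q _ => deriv_sub_le_tilt hh hB.le hw₀ (fun q hq => hmin hq) hs.le hsw' q⟩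
  · rw [hWb, hh.eq_neg_one b (hv.1.trans hb.1.le)]
    ring
  · refine le_trans ?_ (hW.le_tilt hh hc.le hWc (fun q hq => hmin hq) hs.le hsw' hb.2.le hWb hq)
    refine mul_le_mul_of_nonneg_right ?_ (sub_nonneg.2 hq.2)
    rw [min_mul_of_nonneg _ _ hs.le]
    refine min_le_min (by linarith) ?_
    rw [div_mul_eq_mul_div, div_le_iff₀ hC, mul_assoc]
    gcongr
    linarith

theorem exists_isSubwave_of_pos (hW : StableWell W) {κ A η δ : ℝ} (hκ : 0 < κ) (hη : 0 < η)
    (hδ : 0 < δ) :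
    ∀ᶠ ε in 𝓝[>] (0 : ℝ), ∃ b l Q, 1 - η ≤ b ∧ b ≤ 1 - A * ε ^ 2 ∧ deriv W b ≤ 0 ∧ ε * l ≤ δ ∧
      IsSubwave (deriv W) (κ * ε) (-1) b l Q := by
  obtain ⟨k, c, C, hk, hc, hC, hex⟩ := hW.exists_isSubwave_tilt (v := max (1 / 2) (1 - η))
    ⟨le_max_left _ _, max_lt (by norm_num) (by linarith)⟩
  have hscale : Tendsto (fun ε => κ / k * ε) (𝓝[>] 0) (𝓝[>] (0 : ℝ)) := by
    refine tendsto_nhdsWithin_iff.2 ⟨?_, ?_⟩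
    · exact (Continuous.tendsto' (by fun_prop) _ _ (mul_zero _)).mono_left nhdsWithin_le_nhds
    · filter_upwards [self_mem_nhdsWithin] with ε (hε : 0 < ε)
      exact mem_Ioi.2 (by positivity)
  filter_upwards [self_mem_nhdsWithin, hscale.eventually hex,
    eventually_nhdsGT_lt (f := fun ε => C * A * ε) (a := κ / k) (by fun_prop)
      (by simp only [mul_zero]; positivity),
    eventually_nhdsGT_lt (f := fun ε => 4 * ε) (a := δ ^ 2 * (c * (κ / k))) (by fun_prop)
      (by simp only [mul_zero]; positivity)]
    with ε (hε : 0 < ε) ⟨b, hb, hbC, Q, hQ⟩ hA hlen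
  have hb₁ := max_lt_iff.1 hb.1
  rw [← mul_assoc, mul_div_cancel₀ _ hk.ne'] at hQ
  refine ⟨b, _, Q, hb₁.2.le, ?_, (hW.deriv_neg b ⟨by linarith, hb.2⟩).le, ?_, hQ⟩
  · have : C * (A * ε ^ 2) ≤ C * (1 - b) := by nlinarith
    linarith [le_of_mul_le_mul_left this hC]
  · rw [← mul_div_assoc, div_le_iff₀ (by positivity)]
    refine le_of_sq_le_sq ?_ (by positivity)
    rw [mul_pow, mul_pow, Real.sq_sqrt (by linarith), Real.sq_sqrt (by positivity)]
    nlinarith [hb.2, sq_nonneg ε, mul_lt_mul_of_pos_left hlen hε]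

end StableWell

theorem hasGradientAt_comp_norm_sub_sq {E : Type*} [NormedAddCommGroup E] [InnerProductSpace ℝ E]
    [CompleteSpace E] {h : ℝ → ℝ} {h' : ℝ} {x₀ y : E} (hh : HasDerivAt h h' (‖y - x₀‖ ^ 2)) :
    HasGradientAt (fun z => h (‖z - x₀‖ ^ 2)) ((2 * h') • (y - x₀)) y := by
  rw [hasGradientAt_iff_hasFDerivAt]
  refine (hh.comp_hasFDerivAt y ((hasFDerivAt_id y).sub_const x₀).norm_sq).congr_fderiv ?_
  ext v
  simp only [id_eq, ContinuousLinearMap.comp_id, _root_.smul_apply, innerSL_apply_apply,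
    nsmul_eq_mul, Nat.cast_ofNat, smul_eq_mul, InnerProductSpace.toDual_apply_apply,
    inner_smul_left, conj_trivial]
  ring

theorem clTrace_smul_id_add_smulRight {d : ℕ} (c : ℝ) (f : Euc d →L[ℝ] ℝ) (w : Euc d) :
    clTrace (c • ContinuousLinearMap.id ℝ (Euc d) + f.smulRight w) = c * d + f w := by
  have hcoe : ((c • ContinuousLinearMap.id ℝ (Euc d) + f.smulRight w : Euc d →L[ℝ] Euc d) :
      Euc d →ₗ[ℝ] Euc d) = c • LinearMap.id + (f : Euc d →ₗ[ℝ] ℝ).smulRight w := rfl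
  rw [clTrace, hcoe, map_add, map_smul, LinearMap.trace_id, LinearMap.trace_smulRight,
    finrank_euclideanSpace_fin, smul_eq_mul, ContinuousLinearMap.coe_coe]

theorem spaceLap_eq_clTrace {d : ℕ} {φ : Euc d × ℝ → ℝ} {g : Euc d → Euc d}
    {A : Euc d →L[ℝ] Euc d} {x : Euc d} {t : ℝ}
    (hg : ∀ᶠ y in 𝓝 x, HasGradientAt (fun z => φ (z, t)) (g y) y) (hA : HasFDerivAt g A x) :
    spaceLap φ x t = clTrace A :=
  congrArg clTrace (hA.congr_of_eventuallyEq (hg.mono fun _ hy => hy.gradient)).fderiv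

theorem spaceLap_of_eventually_eq_comp_norm_sub_sq {d : ℕ} {φ : Euc d × ℝ → ℝ} {x₀ x : Euc d}
    {t : ℝ} {h h' : ℝ → ℝ} {h'' : ℝ} (hφ : ∀ᶠ y in 𝓝 x, φ (y, t) = h (‖y - x₀‖ ^ 2))
    (hh : ∀ᶠ s in 𝓝 (‖x - x₀‖ ^ 2), HasDerivAt h (h' s) s)
    (hh' : HasDerivAt h' h'' (‖x - x₀‖ ^ 2)) :
    spaceLap φ x t = 2 * d * h' (‖x - x₀‖ ^ 2) + 4 * ‖x - x₀‖ ^ 2 * h'' := by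
  have hcont : Tendsto (fun y : Euc d => ‖y - x₀‖ ^ 2) (𝓝 x) (𝓝 (‖x - x₀‖ ^ 2)) :=
    Continuous.tendsto (by fun_prop) x
  have hg : ∀ᶠ y in 𝓝 x,
      HasGradientAt (fun z => φ (z, t)) ((2 * h' (‖y - x₀‖ ^ 2)) • (y - x₀)) y := by
    filter_upwards [hφ.eventually_nhds, hcont.eventually hh] with y hy hy'
    exact (hasGradientAt_comp_norm_sub_sq hy').congr_of_eventuallyEq hy
  have hc := ((hasGradientAt_comp_norm_sub_sq hh').hasFDerivAt).const_mul 2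
  rw [spaceLap_eq_clTrace hg (hc.smul ((hasFDerivAt_id x).sub_const x₀)),
    clTrace_smul_id_add_smulRight]
  simp only [_root_.smul_apply, smul_eq_mul, InnerProductSpace.toDual_apply_apply,
    inner_smul_left, conj_trivial, real_inner_self_eq_norm_sq]
  ring

theorem spaceLap_of_eventually_eq_comp_norm_sub {d : ℕ} {φ : Euc d × ℝ → ℝ} {x₀ x : Euc d} {t : ℝ}
    {h h' : ℝ → ℝ} {h'' : ℝ} (hx : x ≠ x₀) (hφ : ∀ᶠ y in 𝓝 x, φ (y, t) = h ‖y - x₀‖)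
    (hh : ∀ᶠ ρ in 𝓝 ‖x - x₀‖, HasDerivAt h (h' ρ) ρ) (hh' : HasDerivAt h' h'' ‖x - x₀‖) :
    spaceLap φ x t = h'' + (d - 1) / ‖x - x₀‖ * h' ‖x - x₀‖ := by
  have hρ : 0 < ‖x - x₀‖ := norm_sub_pos_iff.2 hx
  set ρ := ‖x - x₀‖
  have hsq : √(ρ ^ 2) = ρ := Real.sqrt_sq hρ.le
  have hsqrt : HasDerivAt (√·) (1 / (2 * ρ)) (ρ ^ 2) := by
    simpa only [hsq] using Real.hasDerivAt_sqrt (pow_ne_zero 2 hρ.ne')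
  have hsqrt_tendsto : Tendsto (√·) (𝓝 (ρ ^ 2)) (𝓝 ρ) := by
    simpa only [hsq] using hsqrt.continuousAt.tendsto
  have hd : HasDerivAt (fun s => h' (√s) * (1 / (2 * √s)))
      (h'' * (1 / (2 * ρ)) * (1 / (2 * ρ)) + h' ρ * -(1 / (4 * ρ ^ 3))) (ρ ^ 2) := by
    rw [← hsq] at hh'
    have hinv := (hasDerivAt_const (ρ ^ 2) (1 : ℝ)).div (hsqrt.const_mul 2)
      (by rw [hsq]; positivity)
    refine ((hh'.comp (ρ ^ 2) hsqrt).mul hinv).congr_deriv ?_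
    simp only [Function.comp_apply, Pi.div_apply, hsq]
    field_simp
    ring
  rw [spaceLap_of_eventually_eq_comp_norm_sub_sq (x₀ := x₀) (h := fun s => h √s) ?_ ?_ hd, hsq]
  · field_simp
    ring
  · filter_upwards [hφ] with y hy
    rw [hy, Real.sqrt_sq (norm_nonneg _)]
  · filter_upwards [hsqrt_tendsto.eventually hh, lt_mem_nhds (pow_pos hρ 2)] with s hs hs0
    exact hs.comp s (Real.hasDerivAt_sqrt hs0.ne')

theorem exists_contDiff_eventuallyEq {E : Type*} [NormedAddCommGroup E] [NormedSpace ℝ E]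
    [FiniteDimensional ℝ E] {φ : E → ℝ} {p : E}
    (hφ : ∀ᶠ q in 𝓝 p, ContDiffAt ℝ (⊤ : ℕ∞) φ q) :
    ∃ ψ : E → ℝ, ContDiff ℝ (⊤ : ℕ∞) ψ ∧ ψ =ᶠ[𝓝 p] φ := by
  obtain ⟨r, hr, hball⟩ := Metric.eventually_nhds_iff_ball.1 hφ
  let f : ContDiffBump p := ⟨r / 4, r / 2, by positivity, by linarith⟩
  refine ⟨fun q => f q * φ q, contDiff_iff_contDiffAt.2 fun q => ?_, ?_⟩
  · by_cases hq : q ∈ Metric.ball p r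
    · exact f.contDiffAt.mul (hball q hq)
    · have hqf : q ∉ tsupport f := by
        rw [f.tsupport_eq]
        exact fun h => hq (Metric.closedBall_subset_ball (half_lt_self hr) h)
      refine (contDiffAt_const (c := (0 : ℝ))).congr_of_eventuallyEq ?_
      filter_upwards [notMem_tsupport_iff_eventuallyEq.1 hqf] with z hz
      rw [hz, Pi.zero_apply, zero_mul]
  · filter_upwards [f.eventuallyEq_one] with q hq
    rw [hq, Pi.one_apply, one_mul]

theorem timeDeriv_congr {d : ℕ} {φ ψ : Euc d × ℝ → ℝ} {x : Euc d} {t : ℝ}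
    (h : φ =ᶠ[𝓝 (x, t)] ψ) : timeDeriv φ x t = timeDeriv ψ x t :=
  EventuallyEq.deriv_eq (((Continuous.prodMk_right x).tendsto t).eventually h)

theorem spaceLap_congr {d : ℕ} {φ ψ : Euc d × ℝ → ℝ} {x : Euc d} {t : ℝ}
    (h : φ =ᶠ[𝓝 (x, t)] ψ) : spaceLap φ x t = spaceLap ψ x t := by
  refine congrArg clTrace (EventuallyEq.fderiv_eq ?_)
  filter_upwards [(((Continuous.prodMk_left t).tendsto x).eventually h).eventually_nhds] with y hy
  simp only [gradient, EventuallyEq.fderiv_eq hy]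

/-- A viscosity supersolution of `m(ε⁻¹x, εDu) u_t − Δu + ε⁻²W'(u) = 0` in `ℝ^d × (0,∞)`: the
half of `IsEpsSolution` concerning test functions that touch from below. -/
def IsEpsSupersolution {d : ℕ} (m : Euc d → Euc d → ℝ) (W : ℝ → ℝ) (ε : ℝ)
    (u : Euc d × ℝ → ℝ) : Prop :=
  ∀ φ : Euc d × ℝ → ℝ, ContDiff ℝ (⊤ : ℕ∞) φ → ∀ (x : Euc d) (t : ℝ), 0 < t →
    IsLocalMinOn (fun p => u p - φ p) {p : Euc d × ℝ | 0 < p.2} (x, t) →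
      0 ≤ m (ε⁻¹ • x) (ε • spaceGrad φ x t) * timeDeriv φ x t - spaceLap φ x t
        + ε⁻¹ ^ 2 * deriv W (u (x, t))

theorem IsEpsSolution.isEpsSupersolution {d : ℕ} {m : Euc d → Euc d → ℝ} {W : ℝ → ℝ} {ε : ℝ}
    {u : Euc d × ℝ → ℝ} (hu : IsEpsSolution m W ε u) : IsEpsSupersolution m W ε u :=
  hu.2

/-- The concave paraboloid with vertex `(y, t)` that drops by `1 / 2` from its vertex to the sphere
`‖x - y‖ = ρ` and by `1 / 2` to the times `t ± τ`. -/
def paraboloid {d : ℕ} (y : Euc d) (t ρ τ : ℝ) (p : Euc d × ℝ) : ℝ :=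
  -((‖p.1 - y‖ ^ 2 / ρ ^ 2 + (p.2 - t) ^ 2 / τ ^ 2) / 2)

section Paraboloid

variable {d : ℕ} {y : Euc d} {t ρ τ : ℝ}

theorem contDiff_paraboloid : ContDiff ℝ (⊤ : ℕ∞) (paraboloid y t ρ τ) := by
  have hnorm : ContDiff ℝ (⊤ : ℕ∞) fun p : Euc d × ℝ => ‖p.1 - y‖ ^ 2 :=
    (contDiff_fst.sub contDiff_const).norm_sq ℝ
  unfold paraboloid
  fun_prop

theorem spaceLap_paraboloid (x : Euc d) (s : ℝ) :
    spaceLap (paraboloid y t ρ τ) x s = -(d / ρ ^ 2) := by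
  rw [spaceLap_of_eventually_eq_comp_norm_sub_sq (x₀ := y)
    (h := fun r => -((r / ρ ^ 2 + (s - t) ^ 2 / τ ^ 2) / 2)) (h' := fun _ => -(1 / ρ ^ 2 / 2))
    (Eventually.of_forall fun _ => rfl) (Eventually.of_forall fun r => ?_) (hasDerivAt_const _ _)]
  · ring
  · exact ((((hasDerivAt_id r).div_const _).add_const _).div_const 2).neg

theorem timeDeriv_paraboloid (x : Euc d) (s : ℝ) :
    timeDeriv (paraboloid y t ρ τ) x s = -((s - t) / τ ^ 2) := by
  have h := ((((((hasDerivAt_id s).sub_const t).pow 2).div_const (τ ^ 2)).const_add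
    (‖x - y‖ ^ 2 / ρ ^ 2)).div_const 2).neg
  refine h.deriv.trans ?_
  simp only [id, Nat.cast_ofNat, Nat.add_one_sub_one, pow_one, mul_one]
  ring

theorem paraboloid_vertex : paraboloid y t ρ τ (y, t) = 0 := by
  simp [paraboloid]

theorem paraboloid_nonpos (p : Euc d × ℝ) : paraboloid y t ρ τ p ≤ 0 :=
  neg_nonpos.2 (by positivity)

theorem paraboloid_le_neg_half (hρ : 0 < ρ) (hτ : 0 < τ) {p : Euc d × ℝ}
    (hp : p ∉ Metric.ball y ρ ×ˢ Metric.ball t τ) : paraboloid y t ρ τ p ≤ -(1 / 2) := by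
  have hx : 0 ≤ ‖p.1 - y‖ ^ 2 / ρ ^ 2 := by positivity
  have hs : 0 ≤ (p.2 - t) ^ 2 / τ ^ 2 := by positivity
  rw [mem_prod, not_and_or, mem_ball_iff_norm, mem_ball_iff_norm, not_lt, not_lt] at hp
  unfold paraboloid
  rcases hp with h | h
  · have : 1 ≤ ‖p.1 - y‖ ^ 2 / ρ ^ 2 := (one_le_div₀ (by positivity)).2 (by gcongr)
    linarith
  · have : 1 ≤ (p.2 - t) ^ 2 / τ ^ 2 := by
      rw [one_le_div₀ (by positivity), ← sq_abs (p.2 - t)]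
      exact pow_le_pow_left₀ hτ.le h 2
    linarith

theorem exists_isLocalMin_sub_paraboloid {u : Euc d × ℝ → ℝ} (hρ : 0 < ρ) (hτ : 0 < τ)
    (huc : ContinuousOn u (Metric.closedBall y ρ ×ˢ Metric.closedBall t τ))
    (hu : ∀ p ∈ Metric.closedBall y ρ ×ˢ Metric.closedBall t τ, u (y, t) < u p + 1 / 2) :
    ∃ p ∈ Metric.ball y ρ ×ˢ Metric.ball t τ, u p ≤ u (y, t) ∧
      IsLocalMin (fun p => u p - paraboloid y t ρ τ p) p := by
  have hmem : (y, t) ∈ Metric.closedBall y ρ ×ˢ Metric.closedBall t τ :=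
    ⟨Metric.mem_closedBall_self hρ.le, Metric.mem_closedBall_self hτ.le⟩
  have hsub : Metric.ball y ρ ×ˢ Metric.ball t τ ⊆
      Metric.closedBall y ρ ×ˢ Metric.closedBall t τ :=
    prod_mono Metric.ball_subset_closedBall Metric.ball_subset_closedBall
  have hlt : ∀ p ∈ (Metric.closedBall y ρ ×ˢ Metric.closedBall t τ) \
      Metric.ball y ρ ×ˢ Metric.ball t τ,
      u (y, t) - paraboloid y t ρ τ (y, t) < u p - paraboloid y t ρ τ p := fun p hp => by
    rw [paraboloid_vertex]
    linarith [hu p hp.1, paraboloid_le_neg_half hρ hτ hp.2]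
  obtain ⟨p, hp, hmin⟩ :=
    ((isCompact_closedBall y ρ).prod (isCompact_closedBall t τ)).exists_isMinOn_mem_subset
      (huc.sub contDiff_paraboloid.continuous.continuousOn) hmem hlt
  refine ⟨p, hp, ?_, hmin.isLocalMin
    (mem_of_superset ((Metric.isOpen_ball.prod Metric.isOpen_ball).mem_nhds hp) hsub)⟩
  have h : u p - paraboloid y t ρ τ p ≤ u (y, t) - paraboloid y t ρ τ (y, t) := hmin hmem
  rw [paraboloid_vertex] at h
  linarith [paraboloid_nonpos (y := y) (t := t) (ρ := ρ) (τ := τ) p]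

end Paraboloid

namespace IsEpsSupersolution

variable {d : ℕ} {m : Euc d → Euc d → ℝ} {Θ : ℝ} {W : ℝ → ℝ} {ε : ℝ} {u : Euc d × ℝ → ℝ}

theorem exists_nonneg_of_eventually_smooth (hu : IsEpsSupersolution m W ε u)
    {φ : Euc d × ℝ → ℝ} {x : Euc d} {t : ℝ} (ht : 0 < t)
    (hφ : ∀ᶠ p in 𝓝 (x, t), ContDiffAt ℝ (⊤ : ℕ∞) φ p)
    (hmin : IsLocalMin (fun p => u p - φ p) (x, t)) :
    ∃ v : Euc d, 0 ≤ m (ε⁻¹ • x) v * timeDeriv φ x t - spaceLap φ x t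
        + ε⁻¹ ^ 2 * deriv W (u (x, t)) := by
  obtain ⟨ψ, hψ, hψφ⟩ := exists_contDiff_eventuallyEq hφ
  have hmin' : IsLocalMin (fun p => u p - ψ p) (x, t) :=
    hmin.congr (hψφ.mono fun p hp => by simp only [hp])
  have h := hu ψ hψ x t ht (hmin'.filter_mono nhdsWithin_le_nhds)
  rw [timeDeriv_congr hψφ, spaceLap_congr hψφ] at h
  exact ⟨_, h⟩

theorem nonneg_of_isLocalMin_sub_paraboloid (hu : IsEpsSupersolution m W ε u)
    (hm : ∀ y v, 0 ≤ m y v ∧ m y v ≤ Θ) {x y : Euc d} {s t ρ τ : ℝ} (hτ : 0 < τ) (hs : 0 < s)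
    (hst : |s - t| < τ) (hmin : IsLocalMin (fun p => u p - paraboloid y t ρ τ p) (x, s)) :
    0 ≤ Θ / τ + d / ρ ^ 2 + ε⁻¹ ^ 2 * deriv W (u (x, s)) := by
  obtain ⟨v, hv⟩ := hu.exists_nonneg_of_eventually_smooth hs
    (Eventually.of_forall fun _ => contDiff_paraboloid.contDiffAt) hmin
  rw [timeDeriv_paraboloid, spaceLap_paraboloid] at hv
  have hspeed : -((s - t) / τ ^ 2) ≤ 1 / τ := by
    rw [← neg_div, div_le_div_iff₀ (by positivity) hτ]
    nlinarith [(abs_lt.1 hst).1]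
  have hm' := hm (ε⁻¹ • x) v
  calc 0 ≤ m (ε⁻¹ • x) v * -((s - t) / τ ^ 2) - -(d / ρ ^ 2)
        + ε⁻¹ ^ 2 * deriv W (u (x, s)) := hv
    _ ≤ Θ * (1 / τ) - -(d / ρ ^ 2) + ε⁻¹ ^ 2 * deriv W (u (x, s)) := by
        gcongr ?_ - _ + _
        exact (mul_le_mul_of_nonneg_left hspeed hm'.1).trans
          (mul_le_mul_of_nonneg_right hm'.2 (by positivity))
    _ = Θ / τ + d / ρ ^ 2 + ε⁻¹ ^ 2 * deriv W (u (x, s)) := by ring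

/-- At the contact point with the paraboloid, the reaction term `ε⁻² W'(u) ≤ -c ε⁻² (1 - u)` has to
be compensated by the derivatives of the paraboloid, which do not depend on `ε`. -/
theorem one_sub_le_of_half_le (hu : IsEpsSupersolution m W ε u) (hε : 0 < ε)
    (hm : ∀ y v, 0 ≤ m y v ∧ m y v ≤ Θ) {c : ℝ} (hc : 0 < c)
    (hW : ∀ v ∈ Icc (1 / 2 : ℝ) 1, deriv W v ≤ -(c * (1 - v))) {y : Euc d} {t ρ τ : ℝ}
    (hρ : 0 < ρ) (hτ : 0 < τ) (hτt : τ < t)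
    (huc : ContinuousOn u (Metric.closedBall y ρ ×ˢ Metric.closedBall t τ))
    (hur : ∀ p ∈ Metric.closedBall y ρ ×ˢ Metric.closedBall t τ, u p ∈ Icc (1 / 2) 1) :
    1 - (Θ / τ + d / ρ ^ 2) / c * ε ^ 2 ≤ u (y, t) := by
  have hΘ : 0 ≤ Θ := (hm 0 0).1.trans (hm 0 0).2
  rcases le_or_gt 1 (u (y, t)) with h1 | h1
  · have : 0 ≤ (Θ / τ + d / ρ ^ 2) / c * ε ^ 2 := by positivity
    linarith
  obtain ⟨⟨x, s⟩, hxs, hle, hmin⟩ := exists_isLocalMin_sub_paraboloid hρ hτ huc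
    fun p hp => by linarith [(hur p hp).1]
  have hst : |s - t| < τ := hxs.2
  have htest := hu.nonneg_of_isLocalMin_sub_paraboloid hm hτ
    (by linarith [(abs_lt.1 hst).1]) hst hmin
  have hreact := hW _ (hur (x, s)
    (prod_mono Metric.ball_subset_closedBall Metric.ball_subset_closedBall hxs))
  have hprod : 0 ≤ Θ / τ + d / ρ ^ 2 - ε⁻¹ ^ 2 * (c * (1 - u (x, s))) := by
    linarith [mul_le_mul_of_nonneg_left hreact (sq_nonneg ε⁻¹)]
  have hdiv : 1 - u (x, s) ≤ (Θ / τ + d / ρ ^ 2) / c * ε ^ 2 := by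
    rw [inv_pow, inv_mul_eq_div, sub_nonneg, div_le_iff₀ (by positivity)] at hprod
    rw [div_mul_eq_mul_div, le_div_iff₀ hc]
    linarith
  linarith

end IsEpsSupersolution

/-- The function `exp (k s) / (T - s)`, which grows at a rate larger than `k` and blows up at `T`.
At `s = T` it takes the junk value `0`, so that its inverse is continuous there. -/
def blowup (k T s : ℝ) : ℝ :=
  Real.exp (k * s) / (T - s)

section Blowup

variable {k T s : ℝ}

theorem blowup_pos (hs : s < T) : 0 < blowup k T s :=
  div_pos (Real.exp_pos _) (sub_pos.2 hs)

theorem contDiffAt_blowup (hs : s < T) : ContDiffAt ℝ (⊤ : ℕ∞) (blowup k T) s :=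
  ContDiffAt.div (by fun_prop) (by fun_prop) (sub_pos.2 hs).ne'

theorem hasDerivAt_blowup (hs : s < T) :
    HasDerivAt (blowup k T) (k * blowup k T s + blowup k T s / (T - s)) s := by
  have hTs : T - s ≠ 0 := (sub_pos.2 hs).ne'
  refine ((((hasDerivAt_id s).const_mul k).exp).div
    ((hasDerivAt_id s).const_sub T) hTs).congr_deriv ?_
  simp only [blowup, id]
  field_simp
  ring

theorem continuous_inv_blowup : Continuous fun s => (blowup k T s)⁻¹ := by
  simp only [blowup, inv_div]
  exact (continuous_const.sub continuous_id).div (by fun_prop) fun s => (Real.exp_pos _).ne'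

end Blowup

/-- The point `(x, t)` minimizes `(u - v) / blowup`. The correction `a` grows so fast that it will
absorb a reaction term with Lipschitz constant `k`, and the blow-up keeps the minimum away from
`T`, where no test function is available. -/
theorem exists_touching {X : Type*} [TopologicalSpace X] {u v : X × ℝ → ℝ} {B : Set X}
    (hB : IsCompact B) {t₁ T : ℝ} (k : ℝ)
    (hc : ContinuousOn (fun p => u p - v p) (B ×ˢ Icc t₁ T))
    (hbd : ∀ p ∈ B ×ˢ Icc t₁ T, u p < v p → t₁ < p.2 ∧ B ∈ 𝓝 p.1)
    {p : X × ℝ} (hp : p ∈ B ×ˢ Ico t₁ T) (hlt : u p < v p) :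
    ∃ (x : X) (t : ℝ) (a : ℝ → ℝ) (a' : ℝ), t ∈ Ioo t₁ T ∧ 0 < a t ∧ HasDerivAt a a' t ∧
      k * a t < a' ∧ (∀ᶠ s in 𝓝 t, ContDiffAt ℝ (⊤ : ℕ∞) a s) ∧ u (x, t) = v (x, t) - a t ∧
      ∀ᶠ p : X × ℝ in 𝓝 (x, t), v p - a p.2 ≤ u p := by
  let F : X × ℝ → ℝ := fun p => (u p - v p) * (blowup k T p.2)⁻¹
  have hp' : p ∈ B ×ˢ Icc t₁ T := ⟨hp.1, Ico_subset_Icc_self hp.2⟩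
  obtain ⟨⟨x, t⟩, hxt, hmin⟩ := (hB.prod isCompact_Icc).exists_isMinOn ⟨p, hp'⟩
    (hc.mul (continuous_inv_blowup.comp continuous_snd).continuousOn : ContinuousOn F _)
  have hFneg : F (x, t) < 0 :=
    (hmin hp').trans_lt (mul_neg_of_neg_of_pos (sub_neg.2 hlt) (inv_pos.2 (blowup_pos hp.2.2)))
  have htT : t < T := by
    refine hxt.2.2.lt_of_ne fun h => hFneg.ne ?_
    simp only [F, blowup, show t = T from h, sub_self, div_zero, inv_zero, mul_zero]
  have hF : ∀ q : X × ℝ, q.2 < T → u q - v q = F q * blowup k T q.2 := fun q hq =>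
    (inv_mul_cancel_right₀ (blowup_pos hq).ne' _).symm
  have huv : u (x, t) < v (x, t) :=
    sub_neg.1 ((hF (x, t) htT).trans_lt (mul_neg_of_neg_of_pos hFneg (blowup_pos htT)))
  obtain ⟨ht₁, hBx⟩ := hbd _ hxt huv
  have hapos : 0 < -F (x, t) * blowup k T t := mul_pos (neg_pos.2 hFneg) (blowup_pos htT)
  refine ⟨x, t, fun s => -F (x, t) * blowup k T s, _, ⟨ht₁, htT⟩, hapos,
    (hasDerivAt_blowup htT).const_mul _, ?_, ?_, ?_, ?_⟩
  · have := div_pos hapos (sub_pos.2 htT)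
    linarith [mul_div_assoc (-F (x, t)) (blowup k T t) (T - t)]
  · filter_upwards [Iio_mem_nhds htT] with s hs using contDiffAt_const.mul (contDiffAt_blowup hs)
  · linarith [hF (x, t) htT]
  · filter_upwards [prod_mem_nhds hBx (Icc_mem_nhds ht₁ htT),
      continuous_snd.continuousAt.eventually_lt continuousAt_const htT] with q hq hqT
    have hle : F (x, t) ≤ F q := hmin hq
    linarith [hF q hqT, mul_le_mul_of_nonneg_right hle (blowup_pos (k := k) hqT).le]

section Front

variable {d : ℕ} {x₀ x : Euc d} {t ε g'' r' a' : ℝ} {g g' r a : ℝ → ℝ}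

theorem spaceLap_front (hε : ε ≠ 0) (hx : x ≠ x₀) (hg : ∀ z, HasDerivAt g (g' z) z)
    (hg' : HasDerivAt g' g'' ((r t - ‖x - x₀‖) / ε)) :
    spaceLap (fun p : Euc d × ℝ => g ((r p.2 - ‖p.1 - x₀‖) / ε) - a p.2) x t =
      g'' / ε ^ 2 - (d - 1) / ‖x - x₀‖ * (g' ((r t - ‖x - x₀‖) / ε) / ε) := by
  have hz : ∀ ρ, HasDerivAt (fun ρ => (r t - ρ) / ε) (-1 / ε) ρ := fun ρ =>
    ((hasDerivAt_id ρ).const_sub _).div_const ε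
  rw [spaceLap_of_eventually_eq_comp_norm_sub (h := fun ρ => g ((r t - ρ) / ε) - a t) hx
    (Eventually.of_forall fun _ => rfl)
    (Eventually.of_forall fun ρ => ((hg _).comp ρ (hz ρ)).sub_const _)
    ((hg'.comp ‖x - x₀‖ (hz _)).mul_const (-1 / ε))]
  field_simp
  ring

theorem timeDeriv_front (hg : ∀ z, HasDerivAt g (g' z) z) (hr : HasDerivAt r r' t)
    (ha : HasDerivAt a a' t) :
    timeDeriv (fun p : Euc d × ℝ => g ((r p.2 - ‖p.1 - x₀‖) / ε) - a p.2) x t =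
      g' ((r t - ‖x - x₀‖) / ε) * (r' / ε) - a' :=
  (((hg _).comp t ((hr.sub_const ‖x - x₀‖).div_const ε)).sub ha).deriv

theorem eventually_contDiffAt_front (hx : x ≠ x₀) (hg : ContDiff ℝ (⊤ : ℕ∞) g)
    (hr : ∀ᶠ s in 𝓝 t, ContDiffAt ℝ (⊤ : ℕ∞) r s) (ha : ∀ᶠ s in 𝓝 t, ContDiffAt ℝ (⊤ : ℕ∞) a s) :
    ∀ᶠ p in 𝓝 (x, t), ContDiffAt ℝ (⊤ : ℕ∞)
      (fun p : Euc d × ℝ => g ((r p.2 - ‖p.1 - x₀‖) / ε) - a p.2) p := by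
  filter_upwards [continuous_fst.continuousAt.eventually_ne hx,
    (continuous_snd.tendsto (x, t)).eventually hr,
    (continuous_snd.tendsto (x, t)).eventually ha] with p hpx hpr hpa
  have hnorm : ContDiffAt ℝ (⊤ : ℕ∞) (fun p : Euc d × ℝ => ‖p.1 - x₀‖) p :=
    ContDiffAt.norm ℝ (by fun_prop) (sub_ne_zero.2 hpx)
  exact (hg.contDiffAt.comp p (((hpr.comp p contDiffAt_snd).sub hnorm).div_const ε)).sub
    (hpa.comp p contDiffAt_snd)

end Front

/-- A radius `r` on the time interval `[t₁, T]` that shrinks faster than by curvature alone: a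
front at distance at least `r - δ` from the centre has curvature at most `-θ r' - κ`. -/
structure IsShrinkingFront (d : ℕ) (θ κ δ t₁ T : ℝ) (r : ℝ → ℝ) : Prop where
  contDiffAt : ∀ t ∈ Icc t₁ T, ContDiffAt ℝ (⊤ : ℕ∞) r t
  deriv_nonpos : ∀ t ∈ Icc t₁ T, deriv r t ≤ 0
  curvature : ∀ t ∈ Icc t₁ T, ∀ ρ, r t - δ ≤ ρ → 0 < ρ ∧ (d - 1) / ρ + θ * deriv r t ≤ -κ

theorem IsShrinkingFront.antitoneOn {d : ℕ} {θ κ δ t₁ T : ℝ} {r : ℝ → ℝ}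
    (hr : IsShrinkingFront d θ κ δ t₁ T r) : AntitoneOn r (Icc t₁ T) :=
  antitoneOn_of_deriv_nonpos (convex_Icc _ _)
    (fun t ht => (hr.contDiffAt t ht).continuousAt.continuousWithinAt)
    (fun t ht => ((hr.contDiffAt t (interior_subset ht)).differentiableAt
      (by simp)).differentiableWithinAt)
    (fun t ht => hr.deriv_nonpos t (interior_subset ht))

theorem exists_touching_subwave {d : ℕ} {θ κ ε e b l t₁ T δ t : ℝ} {f r Q : ℝ → ℝ}
    {u : Euc d × ℝ → ℝ} {x₀ x : Euc d} (hε : 0 < ε) (hQ : IsSubwave f (κ * ε) e b l Q)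
    (ht₁ : 0 < t₁) (hr : IsShrinkingFront d θ κ δ t₁ T r) (huc : ContinuousOn u {p | 0 < p.2})
    (hur : ∀ p : Euc d × ℝ, 0 < p.2 → e ≤ u p) (hinit : ∀ x, ‖x - x₀‖ ≤ r t₁ → b ≤ u (x, t₁))
    (ht : t ∈ Ico t₁ T) (k : ℝ) (hlt : u (x, t) < Q ((r t - ‖x - x₀‖) / ε)) :
    ∃ (y : Euc d) (s : ℝ) (a : ℝ → ℝ) (a' : ℝ), s ∈ Ioo t₁ T ∧ ‖y - x₀‖ < r s ∧ 0 < a s ∧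
      HasDerivAt a a' s ∧ k * a s < a' ∧ (∀ᶠ σ in 𝓝 s, ContDiffAt ℝ (⊤ : ℕ∞) a σ) ∧
      u (y, s) = Q ((r s - ‖y - x₀‖) / ε) - a s ∧
      ∀ᶠ p : Euc d × ℝ in 𝓝 (y, s), Q ((r p.2 - ‖p.1 - x₀‖) / ε) - a p.2 ≤ u p := by
  have hinside : ∀ p : Euc d × ℝ, 0 < p.2 → u p < Q ((r p.2 - ‖p.1 - x₀‖) / ε) →
      ‖p.1 - x₀‖ < r p.2 := fun p hp hlt => by
    by_contra! h
    have := hQ.le_left _ (div_nonpos_of_nonpos_of_nonneg (sub_nonpos.2 h) hε.le)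
    linarith [hur p hp]
  have hpos : Metric.closedBall x₀ (r t₁) ×ˢ Icc t₁ T ⊆ {p : Euc d × ℝ | 0 < p.2} :=
    fun p hp => ht₁.trans_le hp.2.1
  have hbd : ∀ p ∈ Metric.closedBall x₀ (r t₁) ×ˢ Icc t₁ T,
      u p < Q ((r p.2 - ‖p.1 - x₀‖) / ε) → t₁ < p.2 ∧ Metric.closedBall x₀ (r t₁) ∈ 𝓝 p.1 := by
    intro p hp hlt
    have hpr := (hinside p (hpos hp) hlt).trans_le
      (hr.antitoneOn (left_mem_Icc.2 (hp.2.1.trans hp.2.2)) hp.2 hp.2.1)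
    refine ⟨hp.2.1.lt_of_ne fun h => hlt.not_ge ((hQ.le_right _).trans ?_),
      Metric.closedBall_mem_nhds_of_mem (mem_ball_iff_norm.2 hpr)⟩
    simpa only [h] using hinit p.1 hpr.le
  have hvc : ContinuousOn (fun p : Euc d × ℝ => Q ((r p.2 - ‖p.1 - x₀‖) / ε))
      (Metric.closedBall x₀ (r t₁) ×ˢ Icc t₁ T) := by
    refine hQ.continuous.comp_continuousOn
      (ContinuousOn.div_const (ContinuousOn.sub (fun p hp => ?_) (by fun_prop)) ε)
    exact ((hr.contDiffAt p.2 hp.2).continuousAt.comp continuousAt_snd).continuousWithinAt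
  have hxt := (hinside (x, t) (ht₁.trans_le ht.1) hlt).le.trans
    (hr.antitoneOn ⟨le_rfl, ht.1.trans ht.2.le⟩ (Ico_subset_Icc_self ht) ht.1)
  obtain ⟨y, s, a, a', hs, ha, had, haL, has, huy, hle⟩ := exists_touching
    (v := fun p => Q ((r p.2 - ‖p.1 - x₀‖) / ε)) (p := (x, t)) (isCompact_closedBall x₀ (r t₁)) k
    ((huc.mono hpos).sub hvc) hbd ⟨mem_closedBall_iff_norm.2 hxt, ht⟩ hlt
  refine ⟨y, s, a, a', hs, hinside (y, s) (ht₁.trans hs.1) ?_, ha, had, haL, has, huy, hle⟩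
  rwa [huy, sub_lt_self_iff]

namespace IsEpsSupersolution

variable {d : ℕ} {m : Euc d → Euc d → ℝ} {θ κ : ℝ} {W : ℝ → ℝ} {ε : ℝ} {u : Euc d × ℝ → ℝ}
  {x₀ x : Euc d} {t a' e b l : ℝ} {r a Q : ℝ → ℝ}

theorem spaceLap_sub_le_reaction (hu : IsEpsSupersolution m W ε u) (hm : ∀ y v, θ ≤ m y v)
    {φ : Euc d × ℝ → ℝ} (ht : 0 < t) (hφ : ∀ᶠ p in 𝓝 (x, t), ContDiffAt ℝ (⊤ : ℕ∞) φ p)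
    (hφt : timeDeriv φ x t ≤ 0) (hmin : IsLocalMin (fun p => u p - φ p) (x, t)) :
    spaceLap φ x t - θ * timeDeriv φ x t ≤ ε⁻¹ ^ 2 * deriv W (u (x, t)) := by
  obtain ⟨v, hv⟩ := hu.exists_nonneg_of_eventually_smooth ht hφ hmin
  linarith [mul_le_mul_of_nonpos_right (hm (ε⁻¹ • x) v) hφt]

theorem le_reaction_of_touching_const (hu : IsEpsSupersolution m W ε u) (hm : ∀ y v, θ ≤ m y v)
    (hε : ε ≠ 0) (ht : 0 < t) (ha : HasDerivAt a a' t)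
    (has : ∀ᶠ s in 𝓝 t, ContDiffAt ℝ (⊤ : ℕ∞) a s) (ha' : 0 ≤ a') (hux : u (x, t) = b - a t)
    (hle : ∀ᶠ p : Euc d × ℝ in 𝓝 (x, t), b - a p.2 ≤ u p) :
    ε ^ 2 * (θ * a') ≤ deriv W (u (x, t)) := by
  have htime : timeDeriv (fun p : Euc d × ℝ => b - a p.2) x t = -a' := (ha.const_sub b).deriv
  have hlap : spaceLap (fun p : Euc d × ℝ => b - a p.2) x t = 0 := by
    rw [spaceLap_of_eventually_eq_comp_norm_sub_sq (x₀ := x) (h := fun _ => b - a t)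
      (Eventually.of_forall fun _ => rfl) (Eventually.of_forall fun _ => hasDerivAt_const _ _)
      (hasDerivAt_const _ _)]
    ring
  have h := hu.spaceLap_sub_le_reaction (φ := fun p => b - a p.2) hm ht
    (((continuous_snd.tendsto (x, t)).eventually has).mono fun p hp =>
      contDiffAt_const.sub (hp.comp p contDiffAt_snd))
    (by rw [htime]; exact neg_nonpos.2 ha')
    (hle.mono fun p hp => by simp only [hux]; linarith)
  rw [htime, hlap, inv_pow, inv_mul_eq_div, le_div_iff₀ (by positivity)] at h
  linarith

theorem le_reaction_of_touching_quadratic (hu : IsEpsSupersolution m W ε u)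
    (hm : ∀ y v, θ ≤ m y v) (hε : 0 < ε) (ht : 0 < t) (hx : x ≠ x₀) (ha : HasDerivAt a a' t)
    (has : ∀ᶠ s in 𝓝 t, ContDiffAt ℝ (⊤ : ℕ∞) a s) (ha' : 0 ≤ a')
    (hr : ∀ᶠ s in 𝓝 t, ContDiffAt ℝ (⊤ : ℕ∞) r s) (hr' : deriv r t ≤ 0) {q P C z : ℝ}
    (hP : 0 ≤ P) (hz : z = (r t - ‖x - x₀‖) / ε) (hux : u (x, t) = q - a t)
    (hle : ∀ᶠ p : Euc d × ℝ in 𝓝 (x, t), q + P * ((r p.2 - ‖p.1 - x₀‖) / ε - z)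
      + C / 2 * ((r p.2 - ‖p.1 - x₀‖) / ε - z) ^ 2 - a p.2 ≤ u p) :
    C - ε * (((d - 1) / ‖x - x₀‖ + θ * deriv r t) * P) + ε ^ 2 * (θ * a')
      ≤ deriv W (u (x, t)) := by
  let g : ℝ → ℝ := fun y => q + P * (y - z) + C / 2 * (y - z) ^ 2
  have hg : ∀ y, HasDerivAt g (P + C * (y - z)) y := fun y => by
    have hy := (hasDerivAt_id y).sub_const z
    refine (((hy.const_mul P).const_add q).add ((hy.pow 2).const_mul (C / 2))).congr_deriv ?_
    simp only [id, Nat.cast_ofNat, Nat.add_one_sub_one, pow_one, mul_one]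
    ring
  have hg' : HasDerivAt (fun y => P + C * (y - z)) C z := by
    simpa only [id, mul_one] using (((hasDerivAt_id z).sub_const z).const_mul C).const_add P
  have htime := timeDeriv_front (x₀ := x₀) (x := x) (ε := ε) hg
    (hr.self_of_nhds.differentiableAt (by simp)).hasDerivAt ha
  have hlap := spaceLap_front (x₀ := x₀) (r := r) (a := a) hε.ne' hx hg (by rwa [← hz])
  rw [← hz, sub_self, mul_zero, add_zero] at htime hlap
  have hφt : P * (deriv r t / ε) - a' ≤ 0 := by
    linarith [mul_nonpos_of_nonneg_of_nonpos hP (div_nonpos_of_nonpos_of_nonneg hr' hε.le)]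
  have h := hu.spaceLap_sub_le_reaction hm ht
    (eventually_contDiffAt_front hx (by fun_prop) hr has) (htime.trans_le hφt)
    (hle.mono fun p hp => by
      simp only [g, hux, ← hz, sub_self, mul_zero, add_zero, zero_pow two_ne_zero]
      linarith)
  rw [htime, hlap, inv_pow, inv_mul_eq_div, le_div_iff₀ (by positivity)] at h
  refine le_trans (le_of_eq ?_) h
  field_simp
  ring

theorem le_reaction_of_touching_subwave (hu : IsEpsSupersolution m W ε u)
    (hm : ∀ y v, θ ≤ m y v) (hε : 0 < ε) (ht : 0 < t) (hx : x ≠ x₀) (ha : HasDerivAt a a' t)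
    (has : ∀ᶠ s in 𝓝 t, ContDiffAt ℝ (⊤ : ℕ∞) a s) (ha' : 0 ≤ a')
    (hr : ∀ᶠ s in 𝓝 t, ContDiffAt ℝ (⊤ : ℕ∞) r s) (hr' : deriv r t ≤ 0)
    (hcurv : (d - 1) / ‖x - x₀‖ + θ * deriv r t ≤ -κ) {f : ℝ → ℝ}
    (hQ : IsSubwave f (κ * ε) e b l Q) (hxr : ‖x - x₀‖ < r t)
    (hux : u (x, t) = Q ((r t - ‖x - x₀‖) / ε) - a t)
    (hle : ∀ᶠ p : Euc d × ℝ in 𝓝 (x, t), Q ((r p.2 - ‖p.1 - x₀‖) / ε) - a p.2 ≤ u p) :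
    f (Q ((r t - ‖x - x₀‖) / ε)) + ε ^ 2 * (θ * a') ≤ deriv W (u (x, t)) := by
  obtain ⟨P, hP, hQP⟩ := hQ.taylor _ (div_pos (sub_pos.2 hxr) hε)
  have hz : ContinuousAt (fun p : Euc d × ℝ => (r p.2 - ‖p.1 - x₀‖) / ε) (x, t) :=
    ((hr.self_of_nhds.continuousAt.comp continuousAt_snd).sub (by fun_prop)).div_const ε
  have hC : ∀ C < f (Q ((r t - ‖x - x₀‖) / ε)) - κ * ε * P,
      C ≤ deriv W (u (x, t)) - ε ^ 2 * (θ * a') - κ * ε * P := fun C hC => by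
    have h := hu.le_reaction_of_touching_quadratic (x₀ := x₀) (r := r) (C := C) hm hε ht hx ha has
      ha' hr hr' hP rfl hux (by
        filter_upwards [hle, hz.eventually (hQP C hC)] with p hp hpQ
        linarith)
    linarith [mul_le_mul_of_nonneg_left hcurv (mul_nonneg hε.le hP)]
  linarith [le_of_forall_lt_imp_le_of_dense hC]

theorem le_reaction_of_touching (hu : IsEpsSupersolution m W ε u) (hm : ∀ y v, θ ≤ m y v)
    (hε : 0 < ε) (hQ : IsSubwave (deriv W) (κ * ε) e b l Q) (hWb : deriv W b ≤ 0) {t₁ T δ : ℝ}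
    (ht₁ : 0 < t₁) (hr : IsShrinkingFront d θ κ δ t₁ T r) (hlδ : ε * l ≤ δ) (ht : t ∈ Ioo t₁ T)
    (hxr : ‖x - x₀‖ < r t) (ha : HasDerivAt a a' t)
    (has : ∀ᶠ s in 𝓝 t, ContDiffAt ℝ (⊤ : ℕ∞) a s) (ha' : 0 ≤ a')
    (hux : u (x, t) = Q ((r t - ‖x - x₀‖) / ε) - a t)
    (hle : ∀ᶠ p : Euc d × ℝ in 𝓝 (x, t), Q ((r p.2 - ‖p.1 - x₀‖) / ε) - a p.2 ≤ u p) :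
    deriv W (Q ((r t - ‖x - x₀‖) / ε)) + ε ^ 2 * (θ * a') ≤ deriv W (u (x, t)) := by
  have htT : t ∈ Icc t₁ T := Ioo_subset_Icc_self ht
  have hrs : ∀ᶠ s in 𝓝 t, ContDiffAt ℝ (⊤ : ℕ∞) r s := by
    filter_upwards [Icc_mem_nhds ht.1 ht.2] with s hs using hr.contDiffAt s hs
  rcases lt_or_ge l ((r t - ‖x - x₀‖) / ε) with hz | hz
  · have hcont : ContinuousAt (fun p : Euc d × ℝ => (r p.2 - ‖p.1 - x₀‖) / ε) (x, t) :=
      ((hrs.self_of_nhds.continuousAt.comp continuousAt_snd).sub (by fun_prop)).div_const ε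
    rw [hQ.eq_right _ hz.le] at hux ⊢
    have h := hu.le_reaction_of_touching_const hm hε.ne' (ht₁.trans ht.1) ha has ha' hux (by
      filter_upwards [hle, hcont.eventually_const_lt hz] with p hp hpl
      rwa [hQ.eq_right _ hpl.le] at hp)
    linarith
  · rw [div_le_iff₀ hε] at hz
    obtain ⟨hρ, hcurv⟩ := hr.curvature t htT ‖x - x₀‖ (by linarith)
    exact hu.le_reaction_of_touching_subwave hm hε (ht₁.trans ht.1) (norm_sub_pos_iff.1 hρ) ha has
      ha' hrs (hr.deriv_nonpos t htT) hcurv hQ hxr hux hle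

theorem subwave_le (hu : IsEpsSupersolution m W ε u) (hθ : 0 < θ) (hm : ∀ y v, θ ≤ m y v)
    (hε : 0 < ε) (hW : ContDiff ℝ 1 (deriv W)) (huc : ContinuousOn u {p | 0 < p.2})
    (hur : ∀ p : Euc d × ℝ, 0 < p.2 → e ≤ u p) (hQ : IsSubwave (deriv W) (κ * ε) e b l Q)
    (hWb : deriv W b ≤ 0) {t₁ T δ : ℝ} (ht₁ : 0 < t₁) (hr : IsShrinkingFront d θ κ δ t₁ T r)
    (hlδ : ε * l ≤ δ) (hinit : ∀ x, ‖x - x₀‖ ≤ r t₁ → b ≤ u (x, t₁)) (ht : t ∈ Ico t₁ T) :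
    Q ((r t - ‖x - x₀‖) / ε) ≤ u (x, t) := by
  obtain ⟨L, hL0, hL⟩ := exists_le_add_mul_sub hW e b
  by_contra! hlt
  obtain ⟨y, s, a, a', hs, hyr, ha, had, haL, has, huy, hle⟩ := exists_touching_subwave hε hQ ht₁ hr
    huc hur hinit ht (L / (ε ^ 2 * θ)) hlt
  have hspos : 0 < s := ht₁.trans hs.1
  have huQ : u (y, s) < Q ((r s - ‖y - x₀‖) / ε) := by rwa [huy, sub_lt_self_iff]
  rw [div_mul_eq_mul_div, div_lt_iff₀ (by positivity)] at haL
  have ha' : 0 ≤ a' :=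
    (pos_of_mul_pos_left ((mul_nonneg hL0 ha.le).trans_lt haL) (by positivity)).le
  have hreact := hu.le_reaction_of_touching hm hε hQ hWb ht₁ hr hlδ hs hyr had has ha' huy hle
  have hQs := hQ.le_right ((r s - ‖y - x₀‖) / ε)
  have hlip := hL _ ⟨hur _ hspos, huQ.le.trans hQs⟩ _ ⟨(hur _ hspos).trans huQ.le, hQs⟩ huQ.le
  have hgap : Q ((r s - ‖y - x₀‖) / ε) - u (y, s) = a s := by rw [huy, sub_sub_cancel]
  rw [hgap] at hlip
  linarith

end IsEpsSupersolution

theorem exists_curvature_margin {a b r₀ R : ℝ} (ha : 0 ≤ a) (hab : a < b) (hr₀ : 0 < r₀)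
    (hR : r₀ ≤ R) :
    ∃ κ δ, 0 < κ ∧ 0 < δ ∧ ∀ r ∈ Icc r₀ R, ∀ ρ, r - δ ≤ ρ → 0 < ρ ∧ a / ρ - b / r ≤ -κ := by
  have hb : 0 < b := ha.trans_lt hab
  obtain ⟨σ, hσ, hσ1⟩ := exists_between ((div_lt_one hb).2 hab)
  have hσ0 : 0 < σ := (div_nonneg ha hb.le).trans_lt hσ
  have hgap : 0 < b - a / σ := sub_pos.2 ((div_lt_comm₀ hσ0 hb).2 hσ)
  refine ⟨(b - a / σ) / R, (1 - σ) * r₀, div_pos hgap (hr₀.trans_le hR),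
    mul_pos (sub_pos.2 hσ1) hr₀, fun r hr ρ hρ => ?_⟩
  have hr0 : 0 < r := hr₀.trans_le hr.1
  have hσρ : σ * r ≤ ρ := by
    linarith [mul_le_mul_of_nonneg_left hr.1 (sub_nonneg.2 hσ1.le)]
  refine ⟨(mul_pos hσ0 hr0).trans_le hσρ, ?_⟩
  calc a / ρ - b / r ≤ a / (σ * r) - b / r := by gcongr
    _ = -((b - a / σ) / r) := by rw [← div_div]; ring
    _ ≤ -((b - a / σ) / R) := by gcongr; exact hr.2

theorem exists_isShrinkingFront_sqrt {d : ℕ} {θ Λ R t₁ T : ℝ} (hd : 1 ≤ d) (hΛ : 0 ≤ Λ)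
    (hθΛ : 2 * (d - 1) < θ * Λ) (hT : t₁ ≤ T) (hR : Λ * (T - t₁) < R ^ 2) :
    ∃ κ δ, 0 < κ ∧ 0 < δ ∧ IsShrinkingFront d θ κ δ t₁ T fun t => √(R ^ 2 - Λ * (t - t₁)) := by
  have hd' : (0 : ℝ) ≤ d - 1 := sub_nonneg.2 (by exact_mod_cast hd)
  have hanti : Antitone fun t => √(R ^ 2 - Λ * (t - t₁)) := fun s t hst => by
    dsimp only
    gcongr
  have hpos : ∀ t ∈ Icc t₁ T, 0 < R ^ 2 - Λ * (t - t₁) := fun t ht =>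
    (sub_pos.2 hR).trans_le (by gcongr; exact ht.2)
  have hderiv : ∀ t ∈ Icc t₁ T,
      deriv (fun t => √(R ^ 2 - Λ * (t - t₁))) t = -Λ / (2 * √(R ^ 2 - Λ * (t - t₁))) :=
    fun t ht => by
      have h := ((((hasDerivAt_id t).sub_const t₁).const_mul Λ).const_sub (R ^ 2)).sqrt
        (hpos t ht).ne'
      simpa only [id, mul_one] using h.deriv
  obtain ⟨κ, δ, hκ, hδ, hmargin⟩ := exists_curvature_margin (b := θ * Λ / 2) hd' (by linarith)
    (Real.sqrt_pos.2 (hpos T (right_mem_Icc.2 hT))) (hanti hT)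
  refine ⟨κ, δ, hκ, hδ, fun t ht => ?_, fun t ht => ?_, fun t ht ρ hρ => ?_⟩
  · exact (by fun_prop : ContDiffAt ℝ _ (fun t => R ^ 2 - Λ * (t - t₁)) t).sqrt (hpos t ht).ne'
  · rw [hderiv t ht]
    exact div_nonpos_of_nonpos_of_nonneg (neg_nonpos.2 hΛ) (by positivity)
  · refine (hmargin _ ⟨hanti ht.2, hanti ht.1⟩ ρ hρ).imp_right fun h => ?_
    rw [hderiv t ht]
    convert h using 1
    ring

/-- The filter along which the half-relaxed limits at `p` are taken: `ε → 0⁺` and `(y, s) → p` with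
`s > 0`. -/
def relaxedNhds {d : ℕ} (p : Euc d × ℝ) : Filter (ℝ × (Euc d × ℝ)) :=
  𝓝[{e | 0 < e.1 ∧ 0 < e.2.2}] (0, p)

section RelaxedLimit

variable {d : ℕ} {p : Euc d × ℝ}

theorem eventually_relaxedNhds {P : ℝ × (Euc d × ℝ) → Prop} :
    (∀ᶠ e in relaxedNhds p, P e) ↔ ∃ δ > 0, ∀ (ε : ℝ) (y : Euc d) (s : ℝ), 0 < ε → 0 < s →
      ε + ‖p.1 - y‖ + |p.2 - s| ≤ δ → P (ε, (y, s)) := by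
  have hdist : ∀ ε y s, 0 < ε → dist (ε, (y, s)) ((0 : ℝ), p) =
      max ε (max ‖p.1 - y‖ |p.2 - s|) := fun ε y s hε => by
    rw [Prod.dist_eq, Prod.dist_eq, Real.dist_0_eq_abs, abs_of_pos hε, dist_comm y, dist_comm s,
      dist_eq_norm, Real.dist_eq]
  rw [relaxedNhds, Metric.nhdsWithin_basis_ball.eventually_iff]
  constructor
  · rintro ⟨δ, hδ, h⟩
    refine ⟨δ / 2, half_pos hδ, fun ε y s hε hs hle => h ⟨?_, hε, hs⟩⟩
    rw [Metric.mem_ball, hdist ε y s hε, max_lt_iff, max_lt_iff]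
    have := norm_nonneg (p.1 - y)
    have := abs_nonneg (p.2 - s)
    exact ⟨by linarith, by linarith, by linarith⟩
  · rintro ⟨δ, hδ, h⟩
    refine ⟨δ / 3, by positivity, ?_⟩
    rintro ⟨ε, y, s⟩ ⟨hball, hε, hs⟩
    rw [Metric.mem_ball, hdist ε y s hε, max_lt_iff, max_lt_iff] at hball
    exact h ε y s hε hs (by linarith)

theorem liminfStar_eq_iff {uu : ℝ → Euc d × ℝ → ℝ} {a c : ℝ}
    (huu : ∀ ε : ℝ, 0 < ε → ∀ p : Euc d × ℝ, 0 < p.2 → uu ε p ∈ Icc a c) (hp : 0 ≤ p.2) :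
    liminfStar uu p = c ↔ ∀ η > 0, ∀ᶠ e in relaxedNhds p, c - η ≤ uu e.1 e.2 := by
  let V : {r : ℝ // 0 < r} → Set ℝ := fun δ => {r | ∃ (ε : ℝ) (y : Euc d) (s : ℝ),
    0 < ε ∧ 0 < s ∧ ε + ‖p.1 - y‖ + |p.2 - s| ≤ δ ∧ r = uu ε (y, s)}
  change (⨆ δ, sInf (V δ)) = c ↔ _
  have hV : ∀ δ, V δ ⊆ Icc a c := by
    rintro δ _ ⟨ε, y, s, hε, hs, -, rfl⟩
    exact huu ε hε (y, s) hs
  have hne : ∀ δ, (V δ).Nonempty := fun δ => by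
    have hδ : (0 : ℝ) < δ := δ.2
    refine ⟨_, δ / 2, p.1, p.2 + δ / 2, by positivity, by positivity, ?_, rfl⟩
    rw [sub_self, norm_zero, sub_add_cancel_left, abs_neg, abs_of_pos (by positivity), add_zero,
      add_halves]
  have hbdd : ∀ δ, BddBelow (V δ) := fun δ => bddBelow_Icc.mono (hV δ)
  have hle : ∀ δ, sInf (V δ) ≤ c := fun δ =>
    (csInf_le (hbdd δ) (hne δ).some_mem).trans (hV δ (hne δ).some_mem).2
  have : Nonempty {r : ℝ // 0 < r} := ⟨⟨1, one_pos⟩⟩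
  simp only [eventually_relaxedNhds]
  constructor
  · intro h η hη
    obtain ⟨δ, hδ⟩ := exists_lt_of_lt_ciSup ((sub_lt_self c hη).trans_eq h.symm)
    exact ⟨δ, δ.2, fun ε y s hε hs hle =>
      hδ.le.trans (csInf_le (hbdd δ) ⟨ε, y, s, hε, hs, hle, rfl⟩)⟩
  · refine fun h => le_antisymm (ciSup_le hle) (le_of_forall_sub_le fun η hη => ?_)
    obtain ⟨δ, hδ, hδu⟩ := h η hη
    refine le_ciSup_of_le ⟨c, forall_mem_range.2 hle⟩ ⟨δ, hδ⟩ (le_csInf (hne _) ?_)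
    rintro _ ⟨ε, y, s, hε, hs, hle, rfl⟩
    exact hδu ε y s hε hs hle

theorem eventually_forall_of_relaxedNhds {P : ℝ → Euc d × ℝ → Prop} {K : Set (Euc d)}
    (hK : IsCompact K) {t₀ : ℝ} (hP : ∀ x ∈ K, ∀ᶠ e in relaxedNhds (x, t₀), P e.1 e.2) :
    ∀ᶠ q : ℝ × ℝ in 𝓝 (0, t₀), ∀ y ∈ K, 0 < q.1 → 0 < q.2 → P q.1 (y, q.2) := by
  refine hK.eventually_forall_of_forall_eventually fun x hx => ?_
  have hshuffle : Tendsto (fun z : (ℝ × ℝ) × Euc d => (z.1.1, (z.2, z.1.2))) (𝓝 ((0, t₀), x))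
      (𝓝 (0, (x, t₀))) :=
    Continuous.tendsto' (by fun_prop) _ _ rfl
  filter_upwards [hshuffle.eventually (eventually_nhdsWithin_iff.1 (hP x hx))] with z hz hε hs
  exact hz ⟨hε, hs⟩

end RelaxedLimit

section Evolution

variable {d : ℕ} {m : Euc d → Euc d → ℝ} {θ Θ : ℝ} {W : ℝ → ℝ} {uu : ℝ → Euc d × ℝ → ℝ}
  {x₀ : Euc d}

theorem exists_initial_layer (hm : ∀ y v, 0 ≤ m y v ∧ m y v ≤ Θ) (hW : StableWell W)
    (huc : ∀ ε, 0 < ε → ContinuousOn (uu ε) {p | 0 < p.2})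
    (hu1 : ∀ ε, 0 < ε → ∀ p : Euc d × ℝ, 0 < p.2 → uu ε p ≤ 1)
    (hu : ∀ ε, 0 < ε → IsEpsSupersolution m W ε (uu ε)) {t₀ T R R' : ℝ} (ht₀ : 0 ≤ t₀)
    (hT : t₀ < T) (hR : R' < R)
    (hhalf : ∀ x ∈ Metric.closedBall x₀ R, ∀ᶠ e in relaxedNhds (x, t₀), 1 / 2 ≤ uu e.1 e.2) :
    ∃ t₁ ∈ Ioo t₀ T, ∃ A, ∀ᶠ ε in 𝓝[>] 0, ∀ y, ‖y - x₀‖ ≤ R' → 1 - A * ε ^ 2 ≤ uu ε (y, t₁) := by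
  have hhalf := eventually_forall_of_relaxedNhds (P := fun ε p => 1 / 2 ≤ uu ε p)
    (isCompact_closedBall x₀ R) hhalf
  rw [nhds_prod_eq, eventually_prod_iff] at hhalf
  obtain ⟨pε, hpε, ps, hps, hhalf⟩ := hhalf
  obtain ⟨δ, hδ, hps⟩ := Metric.eventually_nhds_iff.1 hps
  obtain ⟨c, hc, hWc⟩ := hW.exists_deriv_le
  obtain ⟨τ, hτ, hτmin⟩ := exists_between (show 0 < min (δ / 3) ((T - t₀) / 2) from
    lt_min (by positivity) (half_pos (sub_pos.2 hT)))
  rw [lt_min_iff] at hτmin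
  refine ⟨t₀ + 2 * τ, ⟨by linarith, by linarith⟩, (Θ / τ + d / (R - R') ^ 2) / c, ?_⟩
  filter_upwards [self_mem_nhdsWithin, nhdsWithin_le_nhds hpε] with ε hε hεp y hy
  have hcyl : ∀ p ∈ Metric.closedBall y (R - R') ×ˢ Metric.closedBall (t₀ + 2 * τ) τ,
      0 < p.2 ∧ 1 / 2 ≤ uu ε p := by
    rintro ⟨z, s⟩ ⟨hz, hs⟩
    rw [Real.closedBall_eq_Icc] at hs
    have hs0 : 0 < s := by linarith [hs.1]
    have hsδ : dist s t₀ < δ := abs_lt.2 ⟨by linarith [hs.1], by linarith [hs.2]⟩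
    have hzR : z ∈ Metric.closedBall x₀ R := Metric.closedBall_subset_closedBall'
      (by rw [dist_eq_norm]; linarith) hz
    exact ⟨hs0, hhalf hεp (hps hsδ) z hzR hε hs0⟩
  exact (hu ε hε).one_sub_le_of_half_le hε hm hc hWc (sub_pos.2 hR) hτ (by linarith)
    ((huc ε hε).mono fun p hp => (hcyl p hp).1)
    fun p hp => ⟨(hcyl p hp).2, hu1 ε hε p (hcyl p hp).1⟩

theorem eventually_le_inside_front (hθ : 0 < θ) (hm : ∀ y v, θ ≤ m y v) (hW : StableWell W)
    (huc : ∀ ε, 0 < ε → ContinuousOn (uu ε) {p | 0 < p.2})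
    (hur : ∀ ε, 0 < ε → ∀ p : Euc d × ℝ, 0 < p.2 → -1 ≤ uu ε p)
    (hu : ∀ ε, 0 < ε → IsEpsSupersolution m W ε (uu ε)) {κ δ t₁ T A : ℝ} {r : ℝ → ℝ} (hκ : 0 < κ)
    (hδ : 0 < δ) (ht₁ : 0 < t₁) (hr : IsShrinkingFront d θ κ δ t₁ T r)
    (hinit : ∀ᶠ ε in 𝓝[>] 0, ∀ y, ‖y - x₀‖ ≤ r t₁ → 1 - A * ε ^ 2 ≤ uu ε (y, t₁))
    {η δ' : ℝ} (hη : 0 < η) (hδ' : 0 < δ') :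
    ∀ᶠ ε in 𝓝[>] 0, ∀ p : Euc d × ℝ, p.2 ∈ Ico t₁ T → ‖p.1 - x₀‖ + δ' ≤ r p.2 →
      1 - η ≤ uu ε p := by
  filter_upwards [self_mem_nhdsWithin, hinit,
    hW.exists_isSubwave_of_pos (A := A) hκ hη (lt_min hδ hδ')]
    with ε hε hinit ⟨b, l, Q, hηb, hbA, hWb, hl, hQ⟩ ⟨x, t⟩ ht hx
  rw [le_min_iff] at hl
  have hbelow := (hu ε hε).subwave_le hθ hm hε hW.contDiff_deriv (huc ε hε) (hur ε hε) hQ hWb ht₁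
    hr hl.1 (fun y hy => hbA.trans (hinit y hy)) (x := x) ht
  rw [hQ.eq_right _ ((le_div_iff₀' hε).2 (hl.2.trans (le_sub_iff_add_le'.2 hx)))] at hbelow
  exact hηb.trans hbelow

theorem liminfStar_eq_one_inside_front (hθ : 0 < θ) (hm : ∀ y v, θ ≤ m y v) (hW : StableWell W)
    (huc : ∀ ε, 0 < ε → ContinuousOn (uu ε) {p | 0 < p.2})
    (hur : ∀ ε, 0 < ε → ∀ p : Euc d × ℝ, 0 < p.2 → uu ε p ∈ Icc (-1) 1)
    (hu : ∀ ε, 0 < ε → IsEpsSupersolution m W ε (uu ε)) {κ δ t₁ T A : ℝ} {r : ℝ → ℝ} (hκ : 0 < κ)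
    (hδ : 0 < δ) (ht₁ : 0 < t₁) (hr : IsShrinkingFront d θ κ δ t₁ T r)
    (hinit : ∀ᶠ ε in 𝓝[>] 0, ∀ y, ‖y - x₀‖ ≤ r t₁ → 1 - A * ε ^ 2 ≤ uu ε (y, t₁))
    {p : Euc d × ℝ} (ht : p.2 ∈ Ioo t₁ T) (hx : ‖p.1 - x₀‖ < r p.2) : liminfStar uu p = 1 := by
  refine (liminfStar_eq_iff hur (ht₁.trans ht.1).le).2 fun η hη => ?_
  obtain ⟨δ', hδ', hxδ'⟩ := exists_between (sub_pos.2 hx)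
  have hfront : ContinuousAt (fun q : Euc d × ℝ => r q.2 - ‖q.1 - x₀‖) p :=
    ((hr.contDiffAt _ (Ioo_subset_Icc_self ht)).continuousAt.comp continuousAt_snd).sub
      (by fun_prop)
  have hnear : ∀ᶠ q : Euc d × ℝ in 𝓝 p, q.2 ∈ Ioo t₁ T ∧ δ' < r q.2 - ‖q.1 - x₀‖ :=
    (continuousAt_snd.eventually (isOpen_Ioo.mem_nhds ht)).and
      (hfront.eventually (lt_mem_nhds hxδ'))
  have hprod := (eventually_nhdsWithin_iff.1 (eventually_le_inside_front hθ hm hW huc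
    (fun ε hε p hp => (hur ε hε p hp).1) hu hκ hδ ht₁ hr hinit hη hδ')).prod_nhds hnear
  filter_upwards [nhdsWithin_le_nhds hprod, self_mem_nhdsWithin] with e ⟨hlow, hIoo, hlt⟩ hpos
  exact hlow hpos.1 e.2 (Ioo_subset_Ico_self hIoo) (by linarith)

end Evolution

theorem exists_front_parameters {θ a R s ρ : ℝ} (hθ : 0 < θ) (ha : 0 ≤ a) (hR : 0 < R)
    (hρ0 : 0 ≤ ρ) (hρ : ρ < √(R ^ 2 - 2 * θ⁻¹ * a * s)) :
    ∃ Λ R', 0 ≤ Λ ∧ 2 * a < θ * Λ ∧ 0 < R' ∧ R' < R ∧ ρ ^ 2 + Λ * s < R' ^ 2 := by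
  rw [Real.lt_sqrt hρ0] at hρ
  have hcont : ContinuousAt (fun Λ => ρ ^ 2 + Λ * s) (2 * θ⁻¹ * a) := by fun_prop
  obtain ⟨Λ, hΛs, hΛ : _ < Λ⟩ := ((eventually_nhdsGT_lt hcont (a := R ^ 2) (by linarith)).and
    self_mem_nhdsWithin).exists
  have hΛ0 : 0 ≤ Λ := le_trans (by positivity) hΛ.le
  obtain ⟨R', hR', hR'R⟩ := exists_between ((Real.sqrt_lt' hR).2 hΛs)
  have hR'0 : 0 < R' := (Real.sqrt_nonneg _).trans_lt hR'
  refine ⟨Λ, R', hΛ0, ?_, hR'0, hR'R, (Real.sqrt_lt' hR'0).1 hR'⟩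
  calc 2 * a = θ * (2 * θ⁻¹ * a) := by field_simp
    _ < θ * Λ := by gcongr

theorem finite_speed_of_shrinking_general {d : ℕ} (hd : 1 ≤ d) {m : Euc d → Euc d → ℝ} {θ Θ : ℝ}
    (hθ : 0 < θ) (hm : ∀ y v, θ ≤ m y v ∧ m y v ≤ Θ) {W : ℝ → ℝ} (hW : StableWell W)
    {uu : ℝ → Euc d × ℝ → ℝ} (huc : ∀ ε, 0 < ε → ContinuousOn (uu ε) {p | 0 < p.2})
    (hur : ∀ ε, 0 < ε → ∀ p : Euc d × ℝ, 0 < p.2 → uu ε p ∈ Icc (-1) 1)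
    (hu : ∀ ε, 0 < ε → IsEpsSupersolution m W ε (uu ε)) {R t₀ : ℝ} (hR : 0 < R) (ht₀ : 0 ≤ t₀)
    {x₀ : Euc d} (hball : ∀ x, ‖x - x₀‖ < R → liminfStar uu (x, t₀) = 1) {s : ℝ} (hs : 0 ≤ s)
    {x : Euc d} (hx : ‖x - x₀‖ < √(R ^ 2 - 2 * θ⁻¹ * (d - 1) * s)) :
    liminfStar uu (x, t₀ + s) = 1 := by
  rcases hs.eq_or_lt with rfl | hs
  · rw [mul_zero, sub_zero, Real.sqrt_sq hR.le] at hx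
    rw [add_zero, hball x hx]
  obtain ⟨Λ, R', hΛ, hθΛ, hR'0, hR'R, hxR'⟩ := exists_front_parameters hθ
    (sub_nonneg.2 (by exact_mod_cast hd)) hR (norm_nonneg _) hx
  obtain ⟨R'', hR'', hR''R⟩ := exists_between hR'R
  have hhalf : ∀ x ∈ Metric.closedBall x₀ R'', ∀ᶠ e in relaxedNhds (x, t₀),
      1 / 2 ≤ uu e.1 e.2 := fun y hy => by
    have hy1 := hball y ((mem_closedBall_iff_norm.1 hy).trans_lt hR''R)
    filter_upwards [(liminfStar_eq_iff hur ht₀).1 hy1 (1 / 2) (by norm_num)] with e he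
    linarith
  obtain ⟨t₁, ht₁, A, hinit⟩ := exists_initial_layer (fun y v => ⟨hθ.le.trans (hm y v).1,
    (hm y v).2⟩) hW huc (fun ε hε p hp => (hur ε hε p hp).2) hu ht₀ (lt_add_of_pos_right t₀ hs)
    hR'' hhalf
  obtain ⟨κ, δ, hκ, hδ, hfront⟩ := exists_isShrinkingFront_sqrt (R := R') hd hΛ hθΛ
    (le_add_of_nonneg_right hs.le : t₁ ≤ t₁ + s)
    (by rw [add_sub_cancel_left]; exact (le_add_of_nonneg_left (sq_nonneg _)).trans_lt hxR')
  refine liminfStar_eq_one_inside_front (x₀ := x₀) hθ (fun y v => (hm y v).1) hW huc hur hu hκ hδ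
    (ht₀.trans_lt ht₁.1) hfront (A := A) ?_ ⟨ht₁.2, add_lt_add_left ht₁.1 s⟩ ?_
  · simpa only [sub_self, mul_zero, sub_zero, Real.sqrt_sq hR'0.le] using hinit
  · refine Real.lt_sqrt_of_sq_lt ?_
    linarith [mul_le_mul_of_nonneg_left (by linarith [ht₁.1] : t₀ + s - t₁ ≤ s) hΛ]

/-- Theorem 7.2: finite speed of shrinking of the limit phase Ω_t^{(1)}. -/
theorem finite_speed_of_shrinking (d : ℕ) (hd : 2 ≤ d)
    (m : Euc d → Euc d → ℝ) (θ Θ : ℝ) (hm : Mobility d m θ Θ)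
    (W : ℝ → ℝ) (hW : DoubleWell W)
    (u₀ : Euc d → ℝ) (hu₀c : UniformContinuous u₀)
    (hu₀r : ∀ x, u₀ x ∈ Set.Icc (-1:ℝ) 1)
    (uu : ℝ → Euc d × ℝ → ℝ)
    (huu : ∀ ε : ℝ, 0 < ε →
      ContinuousOn (uu ε) {p : Euc d × ℝ | 0 ≤ p.2} ∧
      (∀ p : Euc d × ℝ, 0 ≤ p.2 → uu ε p ∈ Set.Icc (-1:ℝ) 1) ∧
      (∀ x, uu ε (x, 0) = u₀ x) ∧
      IsEpsSolution m W ε (uu ε))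
    (R : ℝ) (hR : 0 < R) (t₀ : ℝ) (ht₀ : 0 ≤ t₀) (x₀ : Euc d)
    (hball : ∀ x : Euc d, ‖x - x₀‖ < R → liminfStar uu (x, t₀) = 1)
    (θl : ℝ) (hθl : 0 < θl) (hθlθ : θl < θ) :
    ∀ s ∈ Set.Icc (0:ℝ) (θl * R^2 / (2 * (d - 1))),
      ∀ x : Euc d, ‖x - x₀‖ < Real.sqrt (R^2 - 2 * θl⁻¹ * (d - 1) * s) →
        liminfStar uu (x, t₀ + s) = 1 := by
  rintro s ⟨hs, -⟩ x hx
  have hd1 : 1 ≤ d := one_le_two.trans hd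
  have hd0 : (0 : ℝ) ≤ d - 1 := sub_nonneg.2 (by exact_mod_cast hd1)
  have hspeed : √(R ^ 2 - 2 * θl⁻¹ * (d - 1) * s) ≤ √(R ^ 2 - 2 * θ⁻¹ * (d - 1) * s) := by gcongr
  exact finite_speed_of_shrinking_general hd1 hm.2.2.1 hm.2.2.2.1 hW.stableWell
    (fun ε hε => (huu ε hε).1.mono fun p (hp : 0 < p.2) => hp.le)
    (fun ε hε p hp => (huu ε hε).2.1 p hp.le)
    (fun ε hε => (huu ε hε).2.2.2.isEpsSupersolution) hR ht₀ hball hs (hx.trans_le hspeed)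

end
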